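/- Let π be a right-angled Artin group with defining graph Γ. Suppose Γ is the union of two induced subgraphs Γ₁ and Γ₂ intersecting in the induced subgraph Γ₀ = Γ₁ ∩ Γ₂, where: Γ₁ and Γ₂ are connected and their flag complexes are 2-connected, and Γ₀ is a disjoint union of vertices. Then Hom_Λ(H²(π; Λ), Λ) = 0. -/

import Mathlib

open Finset

/-- The integral group ring `ℤ[π]`. -/
abbrev GroupRing (π : Type) [Group π] : Type := MonoidAlgebra ℤ π

variable (π : Type) [Group π]

/-- The differential of the inhomogeneous cochain complex computing the group cohomology
`H^*(π; M)` of a left `ℤ[π]`-module `M`. -/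
noncomputable def cochainD (M : Type) [AddCommGroup M] [Module (GroupRing π) M] (n : ℕ) :
    ((Fin n → π) → M) →+ ((Fin (n + 1) → π) → M) where
  toFun f g := (MonoidAlgebra.single (g 0) (1 : ℤ)) • f (fun i => g i.succ)
      + ∑ j : Fin (n + 1), ((-1 : ℤ) ^ ((j : ℕ) + 1)) • f (Fin.contractNth j (· * ·) g)
  map_zero' := by
    funext g; simp
  map_add' f₁ f₂ := by
    funext g
    simp only [Pi.add_apply, smul_add, Finset.sum_add_distrib]
    abel

/-- Inhomogeneous `n`-cocycles. -/
noncomputable def cocyclesGen (M : Type) [AddCommGroup M] [Module (GroupRing π) M] (n : ℕ) :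
    AddSubgroup ((Fin n → π) → M) :=
  (cochainD π M n).ker

/-- Inhomogeneous `n`-coboundaries. -/
noncomputable def coboundariesGen (M : Type) [AddCommGroup M] [Module (GroupRing π) M] :
    (n : ℕ) → AddSubgroup ((Fin n → π) → M)
  | 0 => ⊥
  | (n + 1) => (cochainD π M n).range

/-- The group cohomology `H^n(π; M)`, as an abelian group. -/
noncomputable def groupCoh (M : Type) [AddCommGroup M] [Module (GroupRing π) M] (n : ℕ) : Type :=
  (cocyclesGen π M n) ⧸ ((coboundariesGen π M n).addSubgroupOf (cocyclesGen π M n))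

noncomputable instance (M : Type) [AddCommGroup M] [Module (GroupRing π) M] (n : ℕ) :
    AddCommGroup (groupCoh π M n) := by
  unfold groupCoh; infer_instance

/-- `cd π ≤ n` : the cohomological dimension of `π` is at most `n`, i.e. `H^i(π; M) = 0`
for all `i > n` and all `ℤ[π]`-modules `M`. -/
def cdLE (n : ℕ) : Prop :=
  ∀ (M : Type) (_ : AddCommGroup M) (_ : Module (GroupRing π) M) (i : ℕ), n < i →
    Subsingleton (groupCoh π M i)

/-- `π` is a finitely presented group. -/
def IsFinitelyPresented : Prop :=
  ∃ (m : ℕ) (rels : Finset (FreeGroup (Fin m))),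
    Nonempty (PresentedGroup (rels : Set (FreeGroup (Fin m))) ≃* π)

/-- The cochain differential with group ring coefficients is right `ℤ[π]`-linear
(where right modules are left modules over the opposite ring). -/
noncomputable def cochainDOp (n : ℕ) :
    ((Fin n → π) → GroupRing π) →ₗ[(GroupRing π)ᵐᵒᵖ] ((Fin (n + 1) → π) → GroupRing π) where
  toFun := cochainD π (GroupRing π) n
  map_add' := (cochainD π (GroupRing π) n).map_add
  map_smul' a f := by
    funext g
    simp only [cochainD, AddMonoidHom.coe_mk, ZeroHom.coe_mk, Pi.smul_apply,
      MulOpposite.smul_eq_mul_unop, smul_eq_mul, RingHom.id_apply]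
    rw [add_mul, Finset.sum_mul, ← mul_assoc]
    congr 1
    refine Finset.sum_congr rfl fun j _ => ?_
    rw [smul_mul_assoc]

/-- Cocycles with group ring coefficients, as a right `ℤ[π]`-submodule. -/
noncomputable def cocyclesΛ (n : ℕ) :
    Submodule (GroupRing π)ᵐᵒᵖ ((Fin n → π) → GroupRing π) :=
  LinearMap.ker (cochainDOp π n)

/-- Coboundaries with group ring coefficients, as a right `ℤ[π]`-submodule. -/
noncomputable def coboundariesΛ :
    (n : ℕ) → Submodule (GroupRing π)ᵐᵒᵖ ((Fin n → π) → GroupRing π)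
  | 0 => ⊥
  | (n + 1) => LinearMap.range (cochainDOp π n)

/-- The group cohomology `H^n(π; ℤ[π])` with group ring coefficients,
as a right `ℤ[π]`-module. -/
noncomputable def groupCohΛ (n : ℕ) : Type :=
  (cocyclesΛ π n) ⧸ ((coboundariesΛ π n).comap (cocyclesΛ π n).subtype)

noncomputable instance (n : ℕ) : AddCommGroup (groupCohΛ π n) := by
  unfold groupCohΛ; infer_instance

noncomputable instance (n : ℕ) : Module (GroupRing π)ᵐᵒᵖ (groupCohΛ π n) := by
  unfold groupCohΛ; infer_instance

/-- The commutator relations defining a right-angled Artin group: one commutator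
`[v, w] = v w v⁻¹ w⁻¹` for each edge `{v, w}` of the defining graph. -/
def raagRels (V : Type) (Γ : SimpleGraph V) : Set (FreeGroup V) :=
  {r | ∃ v w : V, Γ.Adj v w ∧
    r = FreeGroup.of v * FreeGroup.of w * (FreeGroup.of v)⁻¹ * (FreeGroup.of w)⁻¹}

/-- The right-angled Artin group defined by the simplicial graph `Γ`. -/
def RAAGroup (V : Type) (Γ : SimpleGraph V) : Type := PresentedGroup (raagRels V Γ)

instance (V : Type) (Γ : SimpleGraph V) : Group (RAAGroup V Γ) :=
  inferInstanceAs (Group (PresentedGroup (raagRels V Γ)))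

/-- The generator of a right-angled Artin group corresponding to a vertex. -/
def RAAGroup.of {V : Type} {Γ : SimpleGraph V} (v : V) : RAAGroup V Γ :=
  PresentedGroup.of v

/-- The geometric realization of the flag complex of a finite simplicial graph `Γ`: the
space of probability weightings of the vertices whose support spans a clique (i.e. a simplex
of the flag complex), topologized as a subspace of `V → ℝ`. -/
def flagRealization (V : Type) [Fintype V] (Γ : SimpleGraph V) : Type :=
  {w : V → ℝ // (∀ v, 0 ≤ w v) ∧ (∑ v, w v) = 1 ∧
    ∀ v u : V, w v ≠ 0 → w u ≠ 0 → v ≠ u → Γ.Adj v u}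

noncomputable instance (V : Type) [Fintype V] (Γ : SimpleGraph V) :
    TopologicalSpace (flagRealization V Γ) := by
  unfold flagRealization; infer_instance

/-- A topological space is 2-connected if it is nonempty and all of its homotopy groups
`π_n`, `n ≤ 2`, are trivial. -/
def TwoConnected (X : Type) [TopologicalSpace X] : Prop :=
  Nonempty X ∧ ∀ (x : X) (n : ℕ), n ≤ 2 → Subsingleton (HomotopyGroup (Fin n) X x)

/-!
Coinduced modules of a right-angled Artin group have no higher cohomology, so `H²` is computed by
functions `e` on the edges of `Γ` which become boundaries `(v - 1) m_w - (w - 1) m_v` after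
coinduction, modulo boundaries over `Λ`. A functional on `H²` is thus a functional on such functions
which kills the boundaries.

Consider first `e(v, w) = κ(v, w) (v - 1) (w - 1)` for an integral 1-cocycle `κ` of the flag
complex. As `κ` has potentials on `Γ₁` and `Γ₂`, `e` is, up to a boundary, a cocycle coming from
`Γ₀` by the Mayer–Vietoris connecting map. There a functional has the form `m ↦ ∑ a_p m_p` with
`∑ a_p (p - 1) = 0`; the vertices of `Γ₀` generate a free group, so all `a_p` vanish. If all the
`(v - 1) (w - 1)` with `κ(v, w) ≠ 0` are left multiples of a common `s` acting surjectively on the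
coinduced module, the functional also vanishes on the quotient of `e` by `s`, because right
multiplication by `s` is injective.

Division by `v - 1` extends to an additive operator on `Λ`, and these operators split every `e` into
`Λ`-combinations of such quotients: one part with `s = 1`, one for each vertex `u`, with
`s = u - 1`, and one for each edge `pq` contained in no triangle, with `s = (p - 1) (q - 1)`.
-/

/-! ### First cohomology of flag complexes -/

section FlagComplex

/-- Simplicial 1-cocycles of the flag complex of `G`, as functions on ordered pairs of vertices
whose values at non-adjacent pairs are irrelevant. -/
structure IsEdgeCocycle {W A : Type} [AddCommGroup A] (G : SimpleGraph W) (κ : W → W → A) :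
    Prop where
  antisymm : ∀ ⦃v w⦄, G.Adj v w → κ v w = -κ w v
  triangle : ∀ ⦃u v w⦄, G.Adj u v → G.Adj v w → G.Adj u w → κ u v + κ v w = κ u w

/-- The vanishing of `H¹(K; ℤ)`, where `K` is the flag complex of `G`. -/
def FlagH1Trivial {W : Type} (G : SimpleGraph W) : Prop :=
  ∀ κ : W → W → ℤ, IsEdgeCocycle G κ → ∃ h : W → ℤ, ∀ v w, G.Adj v w → κ v w = h w - h v

/-- The geometric realization of the flag complex of `G` as a subset of `W → ℝ`; its coercion to a
type is definitionally `flagRealization W G`. -/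
def flagSet (W : Type) [Fintype W] (G : SimpleGraph W) : Set (W → ℝ) :=
  {x | (∀ v, 0 ≤ x v) ∧ (∑ v, x v) = 1 ∧ ∀ v u : W, x v ≠ 0 → x u ≠ 0 → v ≠ u → G.Adj v u}

theorem simplyConnectedSpace_of_twoConnected {X : Type} [TopologicalSpace X]
    (h : TwoConnected X) : SimplyConnectedSpace X := by
  obtain ⟨⟨x₀⟩, h⟩ := h
  rw [simply_connected_iff_loops_nullhomotopic]
  refine ⟨⟨⟨x₀⟩, fun x y => ?_⟩, fun x γ => ?_⟩
  · have := h x 0 (by norm_num)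
    have h0 : Subsingleton (ZerothHomotopy X) :=
      (HomotopyGroup.pi0EquivZerothHomotopy (X := X) (x := x)).symm.subsingleton
    exact Quotient.exact (h0.elim (Quotient.mk _ x) (Quotient.mk _ y))
  · have := h x 1 (by norm_num)
    have h1 : Subsingleton (Path.Homotopic.Quotient x x) :=
      (HomotopyGroup.pi1EquivFundamentalGroup (X := X) (x := x)).symm.subsingleton
    exact Quotient.exact (h1.elim (Quotient.mk _ γ) (Quotient.mk _ (Path.refl x)))

theorem exists_circleExp_lift {X : Type} [TopologicalSpace X] [SimplyConnectedSpace X]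
    [LocallyPathConnectedSpace X] (f : C(X, Circle)) :
    ∃ F : C(X, ℝ), ∀ x, Circle.exp (F x) = f x := by
  obtain ⟨x₀⟩ : Nonempty X := inferInstance
  obtain ⟨θ, hθ⟩ := Circle.exp_surjective (f x₀)
  obtain ⟨F, ⟨-, hF⟩, -⟩ :=
    Circle.isCoveringMap_exp.existsUnique_continuousMap_lifts f x₀ θ hθ
  exact ⟨F, congrFun hF⟩

theorem eventually_support_subset {W : Type} [Finite W] (x : W → ℝ) :
    ∀ᶠ y : W → ℝ in nhds x, ∀ v, x v ≠ 0 → y v ≠ 0 := by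
  rw [Filter.eventually_all]
  intro v
  by_cases hv : x v = 0
  · simp [hv]
  · exact ((continuous_apply v).continuousAt.eventually_ne hv).mono fun y hy _ => hy

variable {W : Type} [Fintype W] {G : SimpleGraph W} {x y : W → ℝ} {κ : W → W → ℤ}

theorem exists_ne_zero_of_mem_flagSet (hx : x ∈ flagSet W G) : ∃ v, x v ≠ 0 := by
  by_contra! h
  simpa [h] using hx.2.1

theorem single_mem_flagSet [DecidableEq W] (v : W) : Pi.single v 1 ∈ flagSet W G := by
  refine ⟨(single_mem_stdSimplex ℝ v).1, (single_mem_stdSimplex ℝ v).2, fun u u' hu hu' huu' => ?_⟩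
  have eq_of_ne_zero : ∀ z, (Pi.single v 1 : W → ℝ) z ≠ 0 → z = v := fun z hz => by
    by_contra h
    exact hz (Pi.single_eq_of_ne h 1)
  exact absurd ((eq_of_ne_zero u hu).trans (eq_of_ne_zero u' hu').symm) huu'

theorem add_smul_mem_flagSet (hx : x ∈ flagSet W G) (hy : y ∈ flagSet W G)
    (hxy : ∀ v u, x v ≠ 0 → y u ≠ 0 → v ≠ u → G.Adj v u) {a b : ℝ} (ha : 0 ≤ a) (hb : 0 ≤ b)
    (hab : a + b = 1) : a • x + b • y ∈ flagSet W G := by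
  have hsimplex : a • x + b • y ∈ stdSimplex ℝ W :=
    convex_stdSimplex ℝ W ⟨hx.1, hx.2.1⟩ ⟨hy.1, hy.2.1⟩ ha hb hab
  have hsupport : ∀ v, (a • x + b • y) v ≠ 0 → x v ≠ 0 ∨ y v ≠ 0 := by
    intro v hv
    by_contra! h
    simp [h.1, h.2] at hv
  refine ⟨hsimplex.1, hsimplex.2, fun v u hv hu hvu => ?_⟩
  rcases hsupport v hv with hv | hv <;> rcases hsupport u hu with hu | hu
  · exact hx.2.2 v u hv hu hvu
  · exact hxy v u hv hu hvu
  · exact (hxy u v hu hv hvu.symm).symm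
  · exact hy.2.2 v u hv hu hvu

theorem isPathConnected_ball_flagSet (x : flagSet W G) {r : ℝ} (hr : 0 < r)
    (hsupport : ∀ y ∈ Metric.ball x.1 r, ∀ v, x.1 v ≠ 0 → y v ≠ 0) :
    IsPathConnected (Metric.ball x r) := by
  rw [Topology.IsInducing.subtypeVal.isPathConnected_iff]
  have hcenter : x.1 ∈ Subtype.val '' Metric.ball x r := ⟨x, Metric.mem_ball_self hr, rfl⟩
  suffices StarConvex ℝ x.1 (Subtype.val '' Metric.ball x r) from this.isPathConnected hcenter
  rintro _ ⟨y, hy, rfl⟩ a b ha hb hab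
  have hmem : a • x.1 + b • y.1 ∈ flagSet W G :=
    add_smul_mem_flagSet x.2 y.2
      (fun v u hv hu => y.2.2.2 v u (hsupport y.1 hy v hv) hu) ha hb hab
  exact ⟨⟨_, hmem⟩, convex_ball x.1 r (Metric.mem_ball_self hr) hy ha hb hab, rfl⟩

instance : LocallyPathConnectedSpace (flagSet W G) := by
  have hradius : ∀ x : flagSet W G, ∃ δ > 0, ∀ y ∈ Metric.ball x.1 δ, ∀ v, x.1 v ≠ 0 → y v ≠ 0 :=
    fun x => Metric.eventually_nhds_iff_ball.1 (eventually_support_subset x.1)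
  choose δ hδ hsupport using hradius
  refine LocallyPathConnectedSpace.of_bases (p := fun x r => 0 < r ∧ r ≤ δ x)
    (s := fun x r => Metric.ball x r) (fun x => ?_) fun x r hr => ?_
  · exact Metric.nhds_basis_ball.restrict fun r hr =>
      ⟨min r (δ x), lt_min hr (hδ x), min_le_right _ _, Metric.ball_subset_ball (min_le_left _ _)⟩
  · exact isPathConnected_ball_flagSet x hr.1 fun y hy =>
      hsupport x y (Metric.ball_subset_ball hr.2 hy)

open Classical in
/-- The linear extension of `κ v` to the star of the vertex `v`: the integral of the cocycle `κ`
along the segment from `v` to `x`. -/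
noncomputable def phase (G : SimpleGraph W) (κ : W → W → ℤ) (v : W) : (W → ℝ) →ₗ[ℝ] ℝ :=
  Fintype.linearCombination ℝ fun u => ((if G.Adj v u then κ v u else 0 : ℤ) : ℝ)

open Classical in
theorem phase_apply (v : W) (x : W → ℝ) :
    phase G κ v x = ∑ u, x u * (if G.Adj v u then κ v u else 0 : ℤ) :=
  Fintype.linearCombination_apply ℝ _ _

open Classical in
theorem phase_single [DecidableEq W] (v w : W) :
    phase G κ v (Pi.single w 1) = (if G.Adj v w then κ v w else 0 : ℤ) :=
  (Fintype.linearCombination_apply_single ℝ _ w 1).trans (one_smul ℝ _)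

open Classical in
theorem phase_change_vertex (hκ : IsEdgeCocycle G κ) (hx : x ∈ flagSet W G) {v w : W}
    (hv : x v ≠ 0) (hw : x w ≠ 0) :
    phase G κ v x = phase G κ w x + (if G.Adj v w then κ v w else 0 : ℤ) := by
  have cocycle : ∀ u, x u ≠ 0 → (if G.Adj v u then κ v u else 0 : ℤ) =
      (if G.Adj w u then κ w u else 0) + if G.Adj v w then κ v w else 0 := by
    intro u hu
    have hvw := hx.2.2 v w hv hw
    have hvu := hx.2.2 v u hv hu
    have hwu := hx.2.2 w u hw hu
    rcases eq_or_ne v w with rfl | hne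
    · simp
    rcases eq_or_ne w u with rfl | hne'
    · simp
    rcases eq_or_ne v u with rfl | hne''
    · simp [hvw hne, (hvw hne).symm, hκ.antisymm (hvw hne)]
    · have := hκ.triangle (hvw hne) (hwu hne') (hvu hne'')
      simp only [hvw hne, hvu hne'', hwu hne', if_true]
      omega
  calc phase G κ v x
      = ∑ u, (x u * (if G.Adj w u then κ w u else 0 : ℤ) +
          x u * (if G.Adj v w then κ v w else 0 : ℤ)) := by
        rw [phase_apply]
        refine Finset.sum_congr rfl fun u _ => ?_
        by_cases hu : x u = 0
        · simp [hu]
        · rw [cocycle u hu]; push_cast; ring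
    _ = phase G κ w x + (if G.Adj v w then κ v w else 0 : ℤ) := by
        rw [Finset.sum_add_distrib, ← Finset.sum_mul, hx.2.1, one_mul, phase_apply]

/-- The map from the flag complex to the circle that is trivial on vertices and winds `κ v w` times
along the edge from `v` to `w`. -/
noncomputable def windingMap (κ : W → W → ℤ) (x : flagSet W G) : Circle :=
  Circle.exp (phase G κ (exists_ne_zero_of_mem_flagSet x.2).choose x * (2 * Real.pi))

theorem windingMap_eq (hκ : IsEdgeCocycle G κ) (x : flagSet W G) {v : W} (hv : x.1 v ≠ 0) :
    windingMap κ x = Circle.exp (phase G κ v x * (2 * Real.pi)) := by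
  have hchange := phase_change_vertex hκ x.2 (exists_ne_zero_of_mem_flagSet x.2).choose_spec hv
  exact Circle.exp_eq_exp.2 ⟨_, by rw [hchange, add_mul]⟩

theorem continuous_windingMap (hκ : IsEdgeCocycle G κ) :
    Continuous (windingMap κ : flagSet W G → Circle) := by
  rw [continuous_iff_continuousAt]
  intro x
  obtain ⟨v, hv⟩ := exists_ne_zero_of_mem_flagSet x.2
  have hnear : ∀ᶠ y : flagSet W G in nhds x, y.1 v ≠ 0 :=
    ((continuous_apply v).comp continuous_subtype_val).continuousAt.eventually_ne hv
  have hcont : Continuous fun y : flagSet W G => Circle.exp (phase G κ v y * (2 * Real.pi)) :=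
    Circle.exp.continuous.comp
      (((phase G κ v).continuous_of_finiteDimensional.comp continuous_subtype_val).mul
        continuous_const)
  exact hcont.continuousAt.congr (hnear.mono fun y hy => (windingMap_eq hκ y hy).symm)

theorem windingMap_single [DecidableEq W] (hκ : IsEdgeCocycle G κ) (v : W) :
    windingMap κ ⟨Pi.single v 1, single_mem_flagSet (G := G) v⟩ = 1 := by
  rw [windingMap_eq hκ _ (v := v) (by simp), phase_single]
  simp

/-- The edge of the flag complex from `v` to `w`, parametrized affinely. -/
noncomputable def flagEdge [DecidableEq W] {v w : W} (hvw : G.Adj v w) (t : unitInterval) :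
    flagSet W G :=
  ⟨(1 - t : ℝ) • Pi.single v 1 + (t : ℝ) • Pi.single w 1,
    add_smul_mem_flagSet (single_mem_flagSet v) (single_mem_flagSet w)
      (fun z z' hz hz' _ => by
        obtain rfl : z = v := by by_contra h; simp [h] at hz
        obtain rfl : z' = w := by by_contra h; simp [h] at hz'
        exact hvw)
      (sub_nonneg.2 t.2.2) t.2.1 (sub_add_cancel 1 _)⟩

theorem windingMap_flagEdge [DecidableEq W] (hκ : IsEdgeCocycle G κ) {v w : W} (hvw : G.Adj v w)
    (t : unitInterval) :
    windingMap κ (flagEdge hvw t) = Circle.exp (t * κ v w * (2 * Real.pi)) := by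
  by_cases ht : (flagEdge hvw t).1 v = 0
  · have ht1 : (t : ℝ) = 1 := by
      have : (flagEdge hvw t).1 v = 1 - t := by simp [flagEdge, hvw.ne]
      linarith
    have hw : (flagEdge hvw t).1 = Pi.single w 1 := by simp [flagEdge, ht1]
    rw [windingMap_eq hκ _ (v := w) (by simp [hw]), hw, phase_single, ht1, one_mul,
      mul_comm (κ v w : ℝ), Circle.exp_two_pi_mul_int]
    simp
  · rw [windingMap_eq hκ _ ht]
    simp [flagEdge, map_add, map_smul, phase_single, hvw]

theorem lift_windingMap_flagEdge [DecidableEq W] (hκ : IsEdgeCocycle G κ) {F : C(flagSet W G, ℝ)}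
    (hF : ∀ x, Circle.exp (F x) = windingMap κ x) {v w : W} (hvw : G.Adj v w) :
    F ⟨_, single_mem_flagSet w⟩ = F ⟨_, single_mem_flagSet v⟩ + κ v w * (2 * Real.pi) := by
  have hstart : flagEdge hvw 0 = ⟨_, single_mem_flagSet v⟩ := Subtype.ext (by simp [flagEdge])
  have hend : flagEdge hvw 1 = ⟨_, single_mem_flagSet w⟩ := Subtype.ext (by simp [flagEdge])
  have hcont : Continuous (flagEdge hvw) := Continuous.subtype_mk (by fun_prop) _
  have hlift := Circle.isCoveringMap_exp.eq_of_comp_eq (g₁ := fun t => F (flagEdge hvw t))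
    (g₂ := fun t => F (flagEdge hvw 0) + (t : ℝ) * κ v w * (2 * Real.pi))
    (F.continuous.comp hcont) (by fun_prop)
    (funext fun t => by
      simp only [Function.comp_apply, Circle.exp_add, hF, hstart, windingMap_single hκ, one_mul,
        windingMap_flagEdge hκ])
    0 (by simp)
  simpa [hstart, hend] using congrFun hlift 1

/-- A lift of the winding map to the universal cover `ℝ → Circle` takes values in `2πℤ` at the
vertices, and these values are the required potential. -/
theorem flagH1Trivial_of_simplyConnectedSpace [SimplyConnectedSpace (flagSet W G)] :
    FlagH1Trivial G := by
  classical
  intro κ hκ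
  obtain ⟨F, hF⟩ := exists_circleExp_lift ⟨windingMap κ, continuous_windingMap hκ⟩
  have hint : ∀ v, ∃ n : ℤ, F ⟨_, single_mem_flagSet v⟩ = n * (2 * Real.pi) := fun v =>
    Circle.exp_eq_one.1 ((hF _).trans (windingMap_single hκ v))
  choose h hh using hint
  refine ⟨h, fun v w hvw => ?_⟩
  have hdiff := lift_windingMap_flagEdge hκ hF hvw
  rw [hh, hh, ← add_mul] at hdiff
  have hdiff' : h w = h v + κ v w := by
    exact_mod_cast mul_right_cancel₀ Real.two_pi_pos.ne' hdiff
  omega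

theorem flagH1Trivial_of_twoConnected (h : TwoConnected (flagRealization W G)) :
    FlagH1Trivial G :=
  have : SimplyConnectedSpace (flagSet W G) := simplyConnectedSpace_of_twoConnected h
  flagH1Trivial_of_simplyConnectedSpace

end FlagComplex

/-! ### Crossed homomorphisms on right-angled Artin groups -/

section CrossedHomomorphism

/-- A crossed homomorphism `D : G → M`, where `G` acts on the `ℤ[H]`-module `M` through
`ρ : G →* H`. -/
def IsCrossedHom {G H M : Type} [Group G] [Group H] [AddCommGroup M] [Module (GroupRing H) M]
    (ρ : G →* H) (D : G → M) : Prop :=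
  ∀ g h, D (g * h) = D g + MonoidAlgebra.single (ρ g) (1 : ℤ) • D h

namespace IsCrossedHom

variable {G H M : Type} [Group G] [Group H] [AddCommGroup M] [Module (GroupRing H) M]
  {ρ : G →* H} {D D' : G → M}

theorem map_one (hD : IsCrossedHom ρ D) : D 1 = 0 := by
  have h := hD 1 1
  rwa [mul_one, _root_.map_one, ← MonoidAlgebra.one_def, one_smul, left_eq_add] at h

theorem map_inv (hD : IsCrossedHom ρ D) (g : G) :
    D g⁻¹ = -(MonoidAlgebra.single (ρ g⁻¹) (1 : ℤ) • D g) := by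
  have h := hD g⁻¹ g
  rw [inv_mul_cancel, hD.map_one] at h
  exact eq_neg_of_add_eq_zero_left h.symm

theorem eq_of_closure_eq_top (hD : IsCrossedHom ρ D) (hD' : IsCrossedHom ρ D') {S : Set G}
    (hS : Subgroup.closure S = ⊤) (h : ∀ g ∈ S, D g = D' g) : D = D' := by
  funext g
  have hg : g ∈ Subgroup.closure S := hS ▸ Subgroup.mem_top g
  induction hg using Subgroup.closure_induction with
  | mem g hg => exact h g hg
  | one => rw [hD.map_one, hD'.map_one]
  | mul a b _ _ ha hb => rw [hD, hD', ha, hb]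
  | inv a _ ha => rw [hD.map_inv, hD'.map_inv, ha]

end IsCrossedHom

/-- The action of a group on the multiplicative copy of a module over its group ring. -/
noncomputable def groupRingMulAut (H M : Type) [Group H] [AddCommGroup M]
    [Module (GroupRing H) M] : H →* MulAut (Multiplicative M) :=
  ((MulAutMultiplicative M).symm.toMonoidHom.comp
    (DistribMulAction.toAddAut (GroupRing H)ˣ M)).comp (MonoidAlgebra.of ℤ H).toHomUnits

theorem groupRingMulAut_apply {H M : Type} [Group H] [AddCommGroup M] [Module (GroupRing H) M]
    (g : H) (m : Multiplicative M) : groupRingMulAut H M g m =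
      Multiplicative.ofAdd (MonoidAlgebra.single g (1 : ℤ) • m.toAdd) :=
  rfl

end CrossedHomomorphism

namespace RAAGroup

variable {V : Type} {Γ : SimpleGraph V} {H M : Type} [Group H] [AddCommGroup M]
  [Module (GroupRing H) M]

theorem commute_of {v w : V} (h : Γ.Adj v w) : Commute (of v : RAAGroup V Γ) (of w) := by
  have hrel : (of v * of w * (of v)⁻¹ * (of w)⁻¹ : RAAGroup V Γ) = 1 :=
    PresentedGroup.one_of_mem ⟨v, w, h, rfl⟩
  rwa [mul_inv_eq_one, mul_inv_eq_iff_eq_mul] at hrel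

theorem closure_range_of : Subgroup.closure (Set.range (of : V → RAAGroup V Γ)) = ⊤ :=
  PresentedGroup.closure_range_of _

theorem hom_ext {F F' : RAAGroup V Γ →* H} (h : ∀ v, F (of v) = F' (of v)) : F = F' :=
  PresentedGroup.ext h

/-- The homomorphism determined by its values on the generators. -/
def lift (F : V → H) (hF : ∀ v w, Γ.Adj v w → Commute (F v) (F w)) : RAAGroup V Γ →* H :=
  PresentedGroup.toGroup (f := F) <| by
    rintro _ ⟨v, w, hvw, rfl⟩
    simp only [map_mul, map_inv, FreeGroup.lift_apply_of]
    rw [mul_inv_eq_one, mul_inv_eq_iff_eq_mul]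
    exact hF v w hvw

@[simp]
theorem lift_of (F : V → H) (hF : ∀ v w, Γ.Adj v w → Commute (F v) (F w)) (v : V) :
    lift F hF (of v) = F v :=
  PresentedGroup.toGroup.of _

/-- Crossed homomorphisms are the sections of the projection `M ⋊ H → H` over `ρ`. -/
theorem exists_crossedHom (ρ : RAAGroup V Γ →* H) (c : V → M)
    (hc : ∀ v w, Γ.Adj v w → (MonoidAlgebra.single (ρ (of v)) (1 : ℤ) - 1) • c w =
      (MonoidAlgebra.single (ρ (of w)) (1 : ℤ) - 1) • c v) :
    ∃ D : RAAGroup V Γ → M, IsCrossedHom ρ D ∧ ∀ v, D (of v) = c v := by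
  let F : V → Multiplicative M ⋊[groupRingMulAut H M] H :=
    fun v => ⟨Multiplicative.ofAdd (c v), ρ (of v)⟩
  have hF : ∀ v w, Γ.Adj v w → Commute (F v) (F w) := fun v w hvw => by
    refine SemidirectProduct.ext ?_ ((commute_of hvw).map ρ)
    have h := hc v w hvw
    rw [sub_smul, sub_smul, one_smul, one_smul, sub_eq_sub_iff_add_eq_add] at h
    refine Multiplicative.toAdd.injective ?_
    simpa [F, groupRingMulAut_apply, add_comm] using h
  have hright : ∀ g, (lift F hF g).right = ρ g :=
    DFunLike.congr_fun (f := SemidirectProduct.rightHom.comp (lift F hF)) (hom_ext fun v => by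
      simp [F])
  refine ⟨fun g => (lift F hF g).left.toAdd, fun g h => ?_, fun v => by simp [F]⟩
  simp only [map_mul, SemidirectProduct.mul_left, hright, groupRingMulAut_apply, toAdd_mul,
    toAdd_ofAdd]

end RAAGroup

/-! ### Coinduced modules -/

/-- The module coinduced from the abelian group `A`: functions `G → A` on which `G` acts by right
translation of the argument. -/
@[ext]
structure Coind (G A : Type) where
  toFun : G → A

namespace Coind

variable {G A B M : Type} [AddCommGroup A] [AddCommGroup B]

instance : CoeFun (Coind G A) fun _ => G → A := ⟨toFun⟩

instance : AddCommGroup (Coind G A) :=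
  Equiv.addCommGroup ⟨toFun, mk, fun _ => rfl, fun _ => rfl⟩

theorem add_apply (ξ η : Coind G A) (x : G) : (ξ + η) x = ξ x + η x := rfl

theorem sub_apply (ξ η : Coind G A) (x : G) : (ξ - η) x = ξ x - η x := rfl

variable [Group G]

noncomputable instance : Module (GroupRing G) (Coind G A) :=
  Module.compHom (Coind G A) (Representation.asAlgebraHom
    { toFun := fun g => (AddMonoidHom.mk' (fun ξ => ⟨fun x => ξ (x * g)⟩)
        fun _ _ => rfl : Coind G A →+ Coind G A).toIntLinearMap
      map_one' := by ext; simp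
      map_mul' := fun g h => by ext; simp [mul_assoc] } :
    MonoidAlgebra ℤ G →ₐ[ℤ] Module.End ℤ (Coind G A)).toRingHom

theorem single_smul_apply (g : G) (ξ : Coind G A) (x : G) :
    (MonoidAlgebra.single g (1 : ℤ) • ξ) x = ξ (x * g) :=
  congrFun (congrArg toFun (LinearMap.congr_fun (Representation.asAlgebraHom_single_one _ g) ξ)) x

/-- Postcomposition with a homomorphism of coefficients. -/
noncomputable def map (f : A →+ B) : Coind G A →ₗ[GroupRing G] Coind G B :=
  MonoidAlgebra.equivariantOfLinearOfComm
    (AddMonoidHom.mk' (fun ξ => ⟨fun x => f (ξ x)⟩) fun _ _ =>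
      Coind.ext (funext fun _ => map_add f _ _) : Coind G A →+ Coind G B).toIntLinearMap
    fun g ξ => Coind.ext <| funext fun x => by
      rw [single_smul_apply]
      exact congrArg f (single_smul_apply g ξ x)

variable [AddCommGroup M] [Module (GroupRing G) M]

variable (G) in
/-- The unit of the adjunction between restriction and coinduction, sending `m` to the orbit map
`x ↦ x • m`. -/
noncomputable def unit : M →ₗ[GroupRing G] Coind G M :=
  MonoidAlgebra.equivariantOfLinearOfComm
    (AddMonoidHom.mk' (fun m => ⟨fun x => MonoidAlgebra.single x (1 : ℤ) • m⟩) fun _ _ =>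
      Coind.ext (funext fun _ => smul_add _ _ _) : M →+ Coind G M).toIntLinearMap
    fun g m => Coind.ext <| funext fun x => by
      rw [single_smul_apply]
      change MonoidAlgebra.single x (1 : ℤ) • MonoidAlgebra.single g (1 : ℤ) • m =
        MonoidAlgebra.single (x * g) (1 : ℤ) • m
      rw [smul_smul, MonoidAlgebra.single_mul_single, one_mul]

theorem unit_apply (m : M) (x : G) : unit G m x = MonoidAlgebra.single x (1 : ℤ) • m := rfl

theorem unit_injective : Function.Injective (unit G : M → Coind G M) := fun m m' h => by
  simpa [unit_apply, ← MonoidAlgebra.one_def] using congrFun (congrArg toFun h) 1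

theorem map_mulRight_unit (a r : GroupRing G) :
    map (AddMonoidHom.mulRight r) (unit G a) = unit G (a * r) :=
  Coind.ext (funext fun _ => mul_assoc _ _ _)

/-- The right inverse of `s` on the coinduced module of the group ring splits off the coefficients:
`a • unit 1 = unit a`. -/
theorem isRightRegular_of_surjective {s : GroupRing G}
    (hs : Function.Surjective (s • · : Coind G (GroupRing G) → _)) : IsRightRegular s := by
  refine isRightRegular_of_non_zero_divisor s fun a ha => unit_injective (G := G) ?_
  obtain ⟨ν, hν : s • ν = unit G 1⟩ := hs (unit G 1)
  rw [map_zero, ← mul_one a, ← smul_eq_mul, map_smul, ← hν, smul_smul, ha, zero_smul]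

end Coind

/-- The group ring of a right-angled Artin group. -/
abbrev RAAGRing {V : Type} (Γ : SimpleGraph V) : Type := GroupRing (RAAGroup V Γ)

/-- The element `v - 1` of the group ring. -/
noncomputable def vertexDiff {V : Type} (Γ : SimpleGraph V) (v : V) : RAAGRing Γ :=
  MonoidAlgebra.single (RAAGroup.of v) 1 - 1

section VertexDiff

variable {V A M : Type} {Γ : SimpleGraph V} [AddCommGroup A] [AddCommGroup M]
  [Module (RAAGRing Γ) M]

theorem vertexDiff_smul (v : V) (m : M) :
    vertexDiff Γ v • m =
    MonoidAlgebra.single (RAAGroup.of v : RAAGroup V Γ) (1 : ℤ) • m - m := by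
  rw [vertexDiff, sub_smul, one_smul]

theorem commute_vertexDiff {v w : V} (h : Γ.Adj v w) :
    Commute (vertexDiff Γ v) (vertexDiff Γ w) := by
  have hsingle : Commute (MonoidAlgebra.single (RAAGroup.of v : RAAGroup V Γ) (1 : ℤ))
      (MonoidAlgebra.single (RAAGroup.of w) 1) := by
    rw [commute_iff_eq, MonoidAlgebra.single_mul_single, MonoidAlgebra.single_mul_single,
      (RAAGroup.commute_of h).eq]
  exact (hsingle.sub_left (Commute.one_left _)).sub_right (Commute.one_right _)

theorem vertexDiff_smul_comm {v w : V} (h : Γ.Adj v w) (m : M) :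
    vertexDiff Γ v • vertexDiff Γ w • m = vertexDiff Γ w • vertexDiff Γ v • m := by
  rw [smul_smul, smul_smul, (commute_vertexDiff h).eq]

/-- The retraction `ρ` onto the free group on `I` turns the equations into the construction of a
crossed homomorphism `D` with prescribed values; then `ξ x = D x (x (ρ x)⁻¹)` is a solution. -/
theorem exists_vertexDiff_smul_eq {I : Set V} (hI : Γ.IsIndepSet I)
    (t : V → Coind (RAAGroup V Γ) A) :
    ∃ ξ : Coind (RAAGroup V Γ) A, ∀ p ∈ I, vertexDiff Γ p • ξ = t p := by
  classical
  have not_both : ∀ v w, Γ.Adj v w → v ∉ I ∨ w ∉ I := fun v w hvw => by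
    by_contra! h
    exact hI h.1 h.2 hvw.ne hvw
  let ρ : RAAGroup V Γ →* RAAGroup V Γ :=
    RAAGroup.lift (fun v => if v ∈ I then RAAGroup.of v else 1) fun v w hvw => by
      rcases not_both v w hvw with h | h <;> simp [h]
  obtain ⟨D, hD, hDof⟩ := RAAGroup.exists_crossedHom ρ (fun v => if v ∈ I then t v else 0)
    fun v w hvw => by
      rcases not_both v w hvw with h | h <;> simp [ρ, h, ← MonoidAlgebra.one_def]
  refine ⟨⟨fun x => D x (x * (ρ x)⁻¹)⟩, fun p hp => Coind.ext (funext fun x => ?_)⟩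
  have hρ : ρ (RAAGroup.of p) = RAAGroup.of p := by simp [ρ, hp]
  rw [vertexDiff_smul, Coind.sub_apply, Coind.single_smul_apply]
  simp only [hD x, map_mul, hρ, hDof, if_pos hp, Coind.add_apply, Coind.single_smul_apply]
  simp [mul_assoc]

variable (Γ) in
theorem vertexDiff_smul_surjective (v : V) :
    Function.Surjective (vertexDiff Γ v • · : Coind (RAAGroup V Γ) A → _) := fun η => by
  obtain ⟨ξ, hξ⟩ := exists_vertexDiff_smul_eq (Set.pairwise_singleton v _) fun _ => η
  exact ⟨ξ, hξ v rfl⟩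

theorem eq_zero_of_sum_mul_vertexDiff_eq_zero {F : Finset V} (hF : Γ.IsIndepSet F)
    {a : V → RAAGRing Γ} (ha : ∑ p ∈ F, a p * vertexDiff Γ p = 0) {p : V} (hp : p ∈ F) :
    a p = 0 := by
  classical
  obtain ⟨ξ, hξ⟩ := exists_vertexDiff_smul_eq hF (Pi.single p (Coind.unit _ (1 : RAAGRing Γ)))
  refine Coind.unit_injective (G := RAAGroup V Γ) ?_
  calc Coind.unit _ (a p)
      = a p • Coind.unit _ 1 := by rw [← map_smul, smul_eq_mul, mul_one]
    _ = ∑ q ∈ F, a q • Pi.single (M := fun _ => Coind (RAAGroup V Γ) (RAAGRing Γ)) p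
          (Coind.unit _ 1) q := by
        rw [Finset.sum_eq_single_of_mem p hp fun q _ hq => by rw [Pi.single_eq_of_ne hq, smul_zero],
          Pi.single_eq_same]
    _ = (∑ q ∈ F, a q * vertexDiff Γ q) • ξ := by
        rw [Finset.sum_smul]
        exact Finset.sum_congr rfl fun q hq => by rw [mul_smul, hξ q hq]
    _ = Coind.unit _ 0 := by rw [ha, zero_smul, map_zero]

end VertexDiff

/-! ### Edge cochains and the second cohomology group -/

section EdgeCochains

variable {V : Type} {Γ : SimpleGraph V} {M N : Type} [AddCommGroup M] [Module (RAAGRing Γ) M]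
  [AddCommGroup N] [Module (RAAGRing Γ) N]

variable (Γ M) in
/-- The boundaries `(v, w) ↦ (v - 1) m_w - (w - 1) m_v` among the functions on edges of `Γ`: the
image of the degree one differential of the Salvetti complex. Elements are functions on all pairs of
vertices, with arbitrary values at non-adjacent pairs. -/
def edgeBoundaries : AddSubgroup (V → V → M) where
  carrier := {e | ∃ m : V → M, ∀ v w, Γ.Adj v w →
    e v w = vertexDiff Γ v • m w - vertexDiff Γ w • m v}
  zero_mem' := ⟨0, by simp⟩
  add_mem' := by
    rintro e e' ⟨m, hm⟩ ⟨m', hm'⟩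
    refine ⟨m + m', fun v w hvw => ?_⟩
    simp only [Pi.add_apply, hm v w hvw, hm' v w hvw, smul_add]
    abel
  neg_mem' := by
    rintro e ⟨m, hm⟩
    refine ⟨-m, fun v w hvw => ?_⟩
    simp only [Pi.neg_apply, hm v w hvw, smul_neg]
    abel

theorem mem_edgeBoundaries_of_eq {e e' : V → V → M} (he : e ∈ edgeBoundaries Γ M)
    (h : ∀ v w, Γ.Adj v w → e' v w = e v w) : e' ∈ edgeBoundaries Γ M := by
  obtain ⟨m, hm⟩ := he
  exact ⟨m, fun v w hvw => (h v w hvw).trans (hm v w hvw)⟩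

theorem map_mem_edgeBoundaries (f : M →ₗ[RAAGRing Γ] N) {e : V → V → M}
    (he : e ∈ edgeBoundaries Γ M) : (fun v w => f (e v w)) ∈ edgeBoundaries Γ N := by
  obtain ⟨m, hm⟩ := he
  exact ⟨fun v => f (m v), fun v w hvw => by
    simp only [hm v w hvw, map_sub, map_smul]⟩

variable (Γ) in
/-- The right submodule of boundaries with group ring coefficients. -/
noncomputable def edgeCoboundariesΛ : Submodule (RAAGRing Γ)ᵐᵒᵖ (V → V → RAAGRing Γ) where
  __ := edgeBoundaries Γ (RAAGRing Γ)
  smul_mem' r _ he :=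
    map_mem_edgeBoundaries (LinearMap.toSpanSingleton (RAAGRing Γ) (RAAGRing Γ) r.unop) he

variable (Γ) in
/-- Edge cochains which become boundaries in the coinduced module. As coinduced modules have no
cohomology, these represent the second cohomology of the group. -/
noncomputable def edgeCocyclesΛ : Submodule (RAAGRing Γ)ᵐᵒᵖ (V → V → RAAGRing Γ) where
  __ := (edgeBoundaries Γ (Coind (RAAGroup V Γ) (RAAGRing Γ))).comap
    (((Coind.unit (RAAGroup V Γ)).toAddMonoidHom.compLeft V).compLeft V)
  smul_mem' r e he := by
    have h := map_mem_edgeBoundaries (Coind.map (AddMonoidHom.mulRight r.unop)) he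
    simp only [AddMonoidHom.compLeft_apply, Function.comp_apply, LinearMap.toAddMonoidHom_coe,
      Coind.map_mulRight_unit] at h
    exact h

theorem mem_edgeCocyclesΛ {e : V → V → RAAGRing Γ} : e ∈ edgeCocyclesΛ Γ ↔
    (fun v w => Coind.unit (RAAGroup V Γ) (e v w)) ∈ edgeBoundaries Γ _ :=
  Iff.rfl

theorem edgeCoboundariesΛ_le_edgeCocyclesΛ : edgeCoboundariesΛ Γ ≤ edgeCocyclesΛ Γ :=
  fun _ => map_mem_edgeBoundaries (Coind.unit _)

theorem mem_edgeCoboundariesΛ_of_eq_zero {e : V → V → RAAGRing Γ}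
    (h : ∀ v w, Γ.Adj v w → e v w = 0) : e ∈ edgeCoboundariesΛ Γ :=
  mem_edgeBoundaries_of_eq (zero_mem _) h

end EdgeCochains

section LowDegreeCochains

variable {G : Type} [Group G]

theorem cochainD_one_apply (β : (Fin 1 → G) → GroupRing G) (a b : G) :
    cochainD G (GroupRing G) 1 β ![a, b] =
      MonoidAlgebra.single a (1 : ℤ) * β ![b] - β ![a * b] + β ![a] := by
  have h0 : Fin.contractNth (0 : Fin 2) (· * ·) ![a, b] = ![a * b] := by
    funext i; fin_cases i; rfl
  have h1 : Fin.contractNth (1 : Fin 2) (· * ·) ![a, b] = ![a] := by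
    funext i; fin_cases i; rfl
  have h2 : (fun i : Fin 1 => ![a, b] i.succ) = ![b] := by
    funext i; fin_cases i; rfl
  change MonoidAlgebra.single a (1 : ℤ) • β (fun i => ![a, b] i.succ) + ∑ j : Fin 2, _ = _
  rw [Fin.sum_univ_two, h0, h1, h2]
  simp
  abel

theorem cochainD_two_apply (φ : (Fin 2 → G) → GroupRing G) (a b c : G) :
    cochainD G (GroupRing G) 2 φ ![a, b, c] =
      MonoidAlgebra.single a (1 : ℤ) * φ ![b, c] - φ ![a * b, c] + φ ![a, b * c] - φ ![a, b] := by
  have h0 : Fin.contractNth (0 : Fin 3) (· * ·) ![a, b, c] = ![a * b, c] := by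
    funext i; fin_cases i <;> rfl
  have h1 : Fin.contractNth (1 : Fin 3) (· * ·) ![a, b, c] = ![a, b * c] := by
    funext i; fin_cases i <;> rfl
  have h2 : Fin.contractNth (2 : Fin 3) (· * ·) ![a, b, c] = ![a, b] := by
    funext i; fin_cases i <;> rfl
  have h3 : (fun i : Fin 2 => ![a, b, c] i.succ) = ![b, c] := by
    funext i; fin_cases i <;> rfl
  change MonoidAlgebra.single a (1 : ℤ) • φ (fun i => ![a, b, c] i.succ) + ∑ j : Fin 3, _ = _
  rw [Fin.sum_univ_three, h0, h1, h2, h3]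
  simp
  abel

theorem mem_cocyclesΛ_two_iff {φ : (Fin 2 → G) → GroupRing G} :
    φ ∈ cocyclesΛ G 2 ↔ ∀ a b c : G, MonoidAlgebra.single a (1 : ℤ) * φ ![b, c] - φ ![a * b, c]
      + φ ![a, b * c] - φ ![a, b] = 0 := by
  simp only [← cochainD_two_apply]
  refine ⟨fun h a b c => congrFun h ![a, b, c], fun h => funext fun g => ?_⟩
  have hg : g = ![g 0, g 1, g 2] := by funext i; fin_cases i <;> rfl
  rw [hg]
  exact h _ _ _

theorem mem_coboundariesΛ_two_iff {φ : (Fin 2 → G) → GroupRing G} :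
    φ ∈ coboundariesΛ G 2 ↔ ∃ β : G → GroupRing G, ∀ a b : G,
      φ ![a, b] = MonoidAlgebra.single a (1 : ℤ) * β b - β (a * b) + β a := by
  constructor
  · rintro ⟨β, rfl⟩
    exact ⟨fun x => β ![x], cochainD_one_apply β⟩
  · rintro ⟨β, h⟩
    refine ⟨fun x => β (x 0), funext fun g => ?_⟩
    have hg : g = ![g 0, g 1] := by funext i; fin_cases i <;> rfl
    rw [hg, h]
    exact cochainD_one_apply (fun x => β (x 0)) (g 0) (g 1)

/-- The cochain `D h x = φ (x, h)` with coefficients in the coinduced module. -/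
def coindPrimitive (φ : (Fin 2 → G) → GroupRing G) (h : G) : Coind G (GroupRing G) :=
  ⟨fun x => φ ![x, h]⟩

theorem smul_coindPrimitive_sub_add {φ : (Fin 2 → G) → GroupRing G} (hφ : φ ∈ cocyclesΛ G 2)
    (g h : G) : MonoidAlgebra.single g (1 : ℤ) • coindPrimitive φ h - coindPrimitive φ (g * h) +
      coindPrimitive φ g = Coind.unit G (φ ![g, h]) := by
  refine Coind.ext (funext fun x => ?_)
  have hx := mem_cocyclesΛ_two_iff.1 hφ x g h
  rw [Coind.add_apply, Coind.sub_apply, Coind.single_smul_apply, Coind.unit_apply, smul_eq_mul]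
  simp only [coindPrimitive]
  rw [← sub_eq_zero, ← neg_eq_zero, ← hx]
  abel

variable (G) in
/-- The quotient of the coinduced module by its submodule of coefficients. -/
abbrev CoindQuotient : Type :=
  Coind G (GroupRing G) ⧸ LinearMap.range (Coind.unit G : GroupRing G →ₗ[GroupRing G] _)

/-- Dimension shifting: functions to the coinduced module which are crossed homomorphisms up to
coefficients correspond to 2-cocycles. -/
theorem isCrossedHom_mk_iff {D : G → Coind G (GroupRing G)} :
    IsCrossedHom (MonoidHom.id G) (fun g => (Submodule.Quotient.mk (D g) : CoindQuotient G)) ↔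
      ∀ g h, ∃ a, Coind.unit G a = MonoidAlgebra.single g (1 : ℤ) • D h - D (g * h) + D g := by
  refine forall₂_congr fun g h => ?_
  rw [MonoidHom.id_apply, ← Submodule.Quotient.mk_smul, ← Submodule.Quotient.mk_add, eq_comm,
    Submodule.Quotient.eq, LinearMap.mem_range, sub_add_eq_add_sub, add_comm (D g)]

theorem exists_cocycle_of_isCrossedHom_mk {D : G → Coind G (GroupRing G)}
    (hD : IsCrossedHom (MonoidHom.id G)
      (fun g => (Submodule.Quotient.mk (D g) : CoindQuotient G))) :
    ∃ φ ∈ cocyclesΛ G 2, ∀ g h,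
      Coind.unit G (φ ![g, h]) = MonoidAlgebra.single g (1 : ℤ) • D h - D (g * h) + D g := by
  have h := isCrossedHom_mk_iff.1 hD
  choose a ha using h
  refine ⟨fun x => a (x 0) (x 1), mem_cocyclesΛ_two_iff.2 fun x y z => ?_, fun g h => ha g h⟩
  have hunit : Coind.unit G
      (MonoidAlgebra.single x (1 : ℤ) • a y z - a (x * y) z + a x (y * z) - a x y) = 0 := by
    rw [map_sub, map_add, map_sub, map_smul, ha, ha, ha, ha, smul_add, smul_sub, smul_smul,
      MonoidAlgebra.single_mul_single, one_mul, mul_assoc]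
    abel
  exact Coind.unit_injective (hunit.trans (map_zero _).symm)

end LowDegreeCochains

section EdgeValue

variable {V : Type} {Γ : SimpleGraph V}

/-- The restriction of a 2-cochain to the tori spanned by the edges of `Γ`. -/
noncomputable def edgeValue : ((Fin 2 → RAAGroup V Γ) → RAAGRing Γ) →ₗ[(RAAGRing Γ)ᵐᵒᵖ]
    (V → V → RAAGRing Γ) where
  toFun φ v w := φ ![RAAGroup.of v, RAAGroup.of w] - φ ![RAAGroup.of w, RAAGroup.of v]
  map_add' φ ψ := by
    funext v w
    simp only [Pi.add_apply]
    abel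
  map_smul' r φ := by
    funext v w
    simp only [Pi.smul_apply, smul_sub, RingHom.id_apply]

theorem edgeValue_apply (φ : (Fin 2 → RAAGroup V Γ) → RAAGRing Γ) (v w : V) :
    edgeValue φ v w = φ ![RAAGroup.of v, RAAGroup.of w] - φ ![RAAGroup.of w, RAAGroup.of v] :=
  rfl

theorem unit_edgeValue {φ : (Fin 2 → RAAGroup V Γ) → RAAGRing Γ}
    {D : RAAGroup V Γ → Coind (RAAGroup V Γ) (RAAGRing Γ)}
    (hD : ∀ g h, Coind.unit _ (φ ![g, h]) =
      MonoidAlgebra.single g (1 : ℤ) • D h - D (g * h) + D g) {v w : V} (hvw : Γ.Adj v w) :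
    Coind.unit _ (edgeValue φ v w) = vertexDiff Γ v • D (RAAGroup.of w) -
      vertexDiff Γ w • D (RAAGroup.of v) := by
  rw [edgeValue_apply, map_sub, hD, hD, (RAAGroup.commute_of hvw).eq, vertexDiff_smul,
    vertexDiff_smul]
  abel

theorem edgeValue_mem_edgeCocyclesΛ {φ : (Fin 2 → RAAGroup V Γ) → RAAGRing Γ}
    (hφ : φ ∈ cocyclesΛ (RAAGroup V Γ) 2) : edgeValue φ ∈ edgeCocyclesΛ Γ :=
  ⟨fun v => coindPrimitive φ (RAAGroup.of v), fun _ _ =>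
    unit_edgeValue fun g h => (smul_coindPrimitive_sub_add hφ g h).symm⟩

theorem edgeValue_mem_edgeCoboundariesΛ {φ : (Fin 2 → RAAGroup V Γ) → RAAGRing Γ}
    (hφ : φ ∈ coboundariesΛ (RAAGroup V Γ) 2) : edgeValue φ ∈ edgeCoboundariesΛ Γ := by
  obtain ⟨β, hβ⟩ := mem_coboundariesΛ_two_iff.1 hφ
  refine ⟨fun v => β (RAAGroup.of v), fun v w hvw => ?_⟩
  rw [edgeValue_apply, hβ, hβ, (RAAGroup.commute_of hvw).eq, vertexDiff_smul, vertexDiff_smul,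
    smul_eq_mul, smul_eq_mul]
  abel

theorem mem_coboundariesΛ_of_edgeValue_mem {φ : (Fin 2 → RAAGroup V Γ) → RAAGRing Γ}
    (hφ : φ ∈ cocyclesΛ (RAAGroup V Γ) 2) (h : edgeValue φ ∈ edgeCoboundariesΛ Γ) :
    φ ∈ coboundariesΛ (RAAGroup V Γ) 2 := by
  obtain ⟨m, hm⟩ := h
  set D := coindPrimitive φ
  have hD := smul_coindPrimitive_sub_add hφ
  obtain ⟨d, hd, hdof⟩ := RAAGroup.exists_crossedHom (MonoidHom.id (RAAGroup V Γ))
    (fun v => D (RAAGroup.of v) - Coind.unit _ (m v)) fun v w hvw => by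
      change vertexDiff Γ v • (_ - _) = vertexDiff Γ w • (_ - _)
      have hedge := unit_edgeValue (fun g h => (hD g h).symm) hvw
      rw [hm v w hvw, map_sub, map_smul, map_smul] at hedge
      rw [smul_sub, smul_sub, sub_eq_sub_iff_sub_eq_sub, ← hedge]
  have hmk : ∀ g, (Submodule.Quotient.mk (D g) : CoindQuotient (RAAGroup V Γ)) =
      Submodule.Quotient.mk (d g) := by
    refine congrFun (IsCrossedHom.eq_of_closure_eq_top (ρ := MonoidHom.id _)
      (isCrossedHom_mk_iff.2 fun g h => ⟨_, (hD g h).symm⟩)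
      (isCrossedHom_mk_iff.2 fun g h => ⟨0, ?_⟩) RAAGroup.closure_range_of ?_)
    · rw [hd g h, MonoidHom.id_apply, map_zero]
      abel
    · rintro _ ⟨v, rfl⟩
      rw [Submodule.Quotient.eq, hdof, sub_sub_cancel]
      exact ⟨_, rfl⟩
  choose β hβ using fun g => (Submodule.Quotient.eq _).1 (hmk g)
  refine mem_coboundariesΛ_two_iff.2 ⟨β, fun a b => Coind.unit_injective (G := RAAGroup V Γ) ?_⟩
  rw [← smul_eq_mul, map_add, map_sub, map_smul, hβ, hβ, hβ, ← hD, hd a b, MonoidHom.id_apply,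
    smul_sub]
  abel

theorem exists_edgeValue_sub_mem {e : V → V → RAAGRing Γ} (he : e ∈ edgeCocyclesΛ Γ) :
    ∃ φ ∈ cocyclesΛ (RAAGroup V Γ) 2, edgeValue φ - e ∈ edgeCoboundariesΛ Γ := by
  obtain ⟨m, hm⟩ := he
  obtain ⟨D', hD', hD'of⟩ := RAAGroup.exists_crossedHom (MonoidHom.id (RAAGroup V Γ))
    (fun v => (Submodule.Quotient.mk (m v) : CoindQuotient (RAAGroup V Γ))) fun v w hvw => by
      change vertexDiff Γ v • _ = vertexDiff Γ w • _
      rw [← Submodule.Quotient.mk_smul, ← Submodule.Quotient.mk_smul, Submodule.Quotient.eq]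
      exact ⟨_, hm v w hvw⟩
  obtain ⟨D, rfl⟩ : ∃ D, D' = fun g => Submodule.Quotient.mk (D g) :=
    ⟨fun g => (D' g).out, funext fun g => (Submodule.Quotient.mk_out (D' g)).symm⟩
  obtain ⟨φ, hφ, hφD⟩ := exists_cocycle_of_isCrossedHom_mk hD'
  choose n hn using fun v => (Submodule.Quotient.eq _).1 (hD'of v)
  refine ⟨φ, hφ, n, fun v w hvw => Coind.unit_injective (G := RAAGroup V Γ) ?_⟩
  have hmvw : Coind.unit _ (e v w) = vertexDiff Γ v • m w - vertexDiff Γ w • m v := hm v w hvw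
  rw [Pi.sub_apply, Pi.sub_apply, map_sub, unit_edgeValue hφD hvw, hmvw, map_sub, map_smul,
    map_smul, hn, hn, smul_sub, smul_sub]
  abel

end EdgeValue

section EdgeCohomology

variable {V : Type} {Γ : SimpleGraph V}

variable (Γ) in
/-- The second cohomology of the group with group ring coefficients, computed from the cells of the
Salvetti complex. -/
noncomputable def groupCohΛTwoEquiv : groupCohΛ (RAAGroup V Γ) 2 ≃ₗ[(RAAGRing Γ)ᵐᵒᵖ]
    edgeCocyclesΛ Γ ⧸ (edgeCoboundariesΛ Γ).submoduleOf (edgeCocyclesΛ Γ) :=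
  LinearEquiv.ofBijective
    (Submodule.mapQ ((coboundariesΛ (RAAGroup V Γ) 2).submoduleOf (cocyclesΛ (RAAGroup V Γ) 2)) _
      (edgeValue.restrict fun _ => edgeValue_mem_edgeCocyclesΛ)
      fun _ => edgeValue_mem_edgeCoboundariesΛ) <| by
    constructor
    · refine (injective_iff_map_eq_zero _).2 fun x hx => ?_
      obtain ⟨φ, rfl⟩ := Submodule.mkQ_surjective _ x
      exact (Submodule.Quotient.mk_eq_zero _).2
        (mem_coboundariesΛ_of_edgeValue_mem φ.2
          ((Submodule.Quotient.mk_eq_zero ((edgeCoboundariesΛ Γ).submoduleOf _)).1 hx))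
    · intro x
      obtain ⟨e, rfl⟩ := Submodule.mkQ_surjective _ x
      obtain ⟨φ, hφ, hφe⟩ := exists_edgeValue_sub_mem e.2
      exact ⟨Submodule.mkQ _ ⟨φ, hφ⟩, (Submodule.Quotient.eq _).2 hφe⟩

end EdgeCohomology

/-! ### Division by the augmentation elements of the vertices -/

section InvGeomSum

variable {G : Type} [Group G]

/-- The geometric sum `x⁻¹ + ⋯ + x⁻ⁿ`, extended to negative `n` as the solution of
`invGeomSum_add_one`. -/
noncomputable def invGeomSum (x : G) (n : ℤ) : GroupRing G :=
  ∑ i ∈ Ioc 0 n, MonoidAlgebra.single (x ^ (-i)) 1 -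
    ∑ i ∈ Ioc n 0, MonoidAlgebra.single (x ^ (-i)) 1

theorem invGeomSum_zero (x : G) : invGeomSum x 0 = 0 := by simp [invGeomSum]

theorem invGeomSum_add_one (x : G) (n : ℤ) :
    invGeomSum x (n + 1) = invGeomSum x n + MonoidAlgebra.single (x ^ (-(n + 1))) 1 := by
  rw [invGeomSum, invGeomSum]
  rcases lt_or_ge n 0 with hn | hn
  · rw [Ioc_eq_empty (show ¬0 < n + 1 by lia), Ioc_eq_empty (show ¬0 < n by lia),
      ← insert_Ioc_add_one_left_eq_Ioc hn, sum_insert (by simp)]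
    abel
  · rw [Ioc_eq_empty (show ¬n + 1 < 0 by lia), Ioc_eq_empty (show ¬n < 0 by lia),
      ← insert_Ioc_right_eq_Ioc_add_one hn, sum_insert (by simp)]
    abel

theorem invGeomSum_add_one_mul_single (x : G) (n : ℤ) :
    invGeomSum x (n + 1) * MonoidAlgebra.single x 1 = invGeomSum x n + 1 := by
  have hzpow : ∀ m : ℤ, (MonoidAlgebra.single (x ^ (-(m + 1))) 1 * MonoidAlgebra.single x 1 :
      GroupRing G) = MonoidAlgebra.single (x ^ (-m)) 1 := fun m => by
    rw [MonoidAlgebra.single_mul_single, ← zpow_add_one, one_mul, neg_add, neg_add_cancel_right]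
  induction n using Int.induction_on with
  | zero =>
    rw [invGeomSum_add_one, add_mul, hzpow, invGeomSum_zero, zero_mul, neg_zero, zpow_zero,
      MonoidAlgebra.one_def]
  | succ n ih =>
    rw [invGeomSum_add_one, add_mul, ih, hzpow, invGeomSum_add_one x n]
    abel
  | pred n ih =>
    rw [invGeomSum_add_one, add_mul, hzpow] at ih
    have hpred := invGeomSum_add_one x (-(n : ℤ) - 1)
    rw [sub_add_cancel] at hpred ⊢
    rw [← add_left_inj, ih, hpred]
    abel

theorem commute_invGeomSum_single {x y : G} (h : Commute x y) (n : ℤ) :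
    Commute (invGeomSum x n) (MonoidAlgebra.single y 1) := by
  have hterm : ∀ i : ℤ, Commute (MonoidAlgebra.single (x ^ (-i)) (1 : ℤ))
      (MonoidAlgebra.single y 1) := fun i => by
    rw [commute_iff_eq, MonoidAlgebra.single_mul_single, MonoidAlgebra.single_mul_single,
      (h.zpow_left _).eq]
  exact (Commute.sum_left _ _ _ fun i _ => hterm i).sub_left
    (Commute.sum_left _ _ _ fun i _ => hterm i)

end InvGeomSum

section VertexQuot

variable {V : Type} {Γ : SimpleGraph V}

open Classical in
/-- The exponent sum of the generator `v`. -/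
noncomputable def RAAGroup.exponent (v : V) : RAAGroup V Γ →* Multiplicative ℤ :=
  lift (fun w => if w = v then Multiplicative.ofAdd 1 else 1) fun _ _ _ => Commute.all _ _

theorem RAAGroup.exponent_of_self (v : V) :
    exponent v (of v : RAAGroup V Γ) = Multiplicative.ofAdd 1 := by
  simp [exponent]

theorem RAAGroup.exponent_of_of_ne {v w : V} (h : w ≠ v) :
    exponent v (of w : RAAGroup V Γ) = 1 := by
  simp [exponent, h]

/-- The additive left inverse of multiplication by `v - 1` sending a group element `g` of exponent
`n` to `(1 - v⁻ⁿ) / (v - 1) * g`. -/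
noncomputable def vertexQuot (v : V) : RAAGRing Γ →+ RAAGRing Γ :=
  MonoidAlgebra.liftNC (Int.castAddHom _) fun g =>
    invGeomSum (RAAGroup.of v) (RAAGroup.exponent v g).toAdd * MonoidAlgebra.single g 1

theorem vertexQuot_single (v : V) (g : RAAGroup V Γ) :
    vertexQuot v (MonoidAlgebra.single g 1) =
      invGeomSum (RAAGroup.of v) (RAAGroup.exponent v g).toAdd * MonoidAlgebra.single g 1 := by
  simp only [vertexQuot, MonoidAlgebra.liftNC_single, Int.coe_castAddHom, Int.cast_one, one_mul]

theorem groupRing_addHom_ext {G A : Type} [Group G] [AddCommGroup A] {F F' : GroupRing G →+ A}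
    (h : ∀ g, F (MonoidAlgebra.single g 1) = F' (MonoidAlgebra.single g 1)) : F = F' :=
  MonoidAlgebra.addHom_ext' fun g => AddMonoidHom.ext_int (h g)

theorem vertexQuot_vertexDiff_mul (v : V) (a : RAAGRing Γ) :
    vertexQuot v (vertexDiff Γ v * a) = a := by
  suffices (vertexQuot v).comp (AddMonoidHom.mulLeft (vertexDiff Γ v)) = AddMonoidHom.id _ from
    DFunLike.congr_fun this a
  refine groupRing_addHom_ext fun g => ?_
  rw [AddMonoidHom.comp_apply, AddMonoidHom.coe_mulLeft, AddMonoidHom.id_apply, vertexDiff,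
    sub_mul, one_mul, map_sub, MonoidAlgebra.single_mul_single, one_mul, vertexQuot_single,
    vertexQuot_single, map_mul, RAAGroup.exponent_of_self, toAdd_mul, toAdd_ofAdd, add_comm,
    ← one_mul (1 : ℤ), ← MonoidAlgebra.single_mul_single, ← mul_assoc, one_mul,
    invGeomSum_add_one_mul_single, add_mul, one_mul, add_sub_cancel_left]

theorem vertexQuot_single_mul {v : V} {x : RAAGroup V Γ} (hcomm : Commute (RAAGroup.of v) x)
    (hexp : RAAGroup.exponent v x = 1) (a : RAAGRing Γ) :
    vertexQuot v (MonoidAlgebra.single x 1 * a) = MonoidAlgebra.single x 1 * vertexQuot v a := by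
  suffices (vertexQuot v).comp (AddMonoidHom.mulLeft (MonoidAlgebra.single x 1)) =
      (AddMonoidHom.mulLeft (MonoidAlgebra.single x 1)).comp (vertexQuot v) from
    DFunLike.congr_fun this a
  refine groupRing_addHom_ext fun g => ?_
  rw [AddMonoidHom.comp_apply, AddMonoidHom.comp_apply, AddMonoidHom.coe_mulLeft,
    vertexQuot_single, ← mul_assoc, ← (commute_invGeomSum_single hcomm _).eq, mul_assoc,
    MonoidAlgebra.single_mul_single, one_mul, vertexQuot_single, map_mul, hexp, one_mul]

theorem vertexQuot_vertexDiff_mul_of_adj {v w : V} (h : Γ.Adj v w) (a : RAAGRing Γ) :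
    vertexQuot v (vertexDiff Γ w * a) = vertexDiff Γ w * vertexQuot v a := by
  rw [vertexDiff, sub_mul, sub_mul, one_mul, one_mul, map_sub,
    vertexQuot_single_mul (RAAGroup.commute_of h) (RAAGroup.exponent_of_of_ne h.ne')]

theorem vertexQuot_invGeomSum_mul {v w : V} (h : Γ.Adj v w) (n : ℤ) (a : RAAGRing Γ) :
    vertexQuot v (invGeomSum (RAAGroup.of w) n * a) =
      invGeomSum (RAAGroup.of w) n * vertexQuot v a := by
  have hterm : ∀ i : ℤ, vertexQuot v (MonoidAlgebra.single (RAAGroup.of w ^ i) 1 * a) =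
      MonoidAlgebra.single (RAAGroup.of w ^ i) 1 * vertexQuot v a := fun i =>
    vertexQuot_single_mul ((RAAGroup.commute_of h).zpow_right _)
      (by rw [map_zpow, RAAGroup.exponent_of_of_ne h.ne', one_zpow]) a
  simp only [invGeomSum, sub_mul, sum_mul, map_sub, map_sum, hterm]

theorem vertexQuot_comm {v w : V} (h : Γ.Adj v w) (a : RAAGRing Γ) :
    vertexQuot v (vertexQuot w a) = vertexQuot w (vertexQuot v a) := by
  suffices (vertexQuot v).comp (vertexQuot w) =
      (vertexQuot w).comp (vertexQuot v : RAAGRing Γ →+ _) from DFunLike.congr_fun this a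
  refine groupRing_addHom_ext fun g => ?_
  have hcomm : Commute (invGeomSum (RAAGroup.of v : RAAGroup V Γ) (RAAGroup.exponent v g).toAdd)
      (invGeomSum (RAAGroup.of w) (RAAGroup.exponent w g).toAdd) :=
    (Commute.sum_right _ _ _ fun i _ => commute_invGeomSum_single
      ((RAAGroup.commute_of h).zpow_right _) _).sub_right
    (Commute.sum_right _ _ _ fun i _ => commute_invGeomSum_single
      ((RAAGroup.commute_of h).zpow_right _) _)
  rw [AddMonoidHom.comp_apply, AddMonoidHom.comp_apply, vertexQuot_single w, vertexQuot_single v,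
    vertexQuot_invGeomSum_mul h, vertexQuot_invGeomSum_mul h.symm, vertexQuot_single,
    vertexQuot_single, ← mul_assoc, ← mul_assoc, hcomm.eq]

end VertexQuot

/-! ### Acyclic splittings of the defining graph -/

/-- A covering of the edges of `Γ` by two full subgraphs which meet in isolated vertices and whose
flag complexes have no first cohomology. -/
structure IsAcyclicSplitting {V : Type} (Γ : SimpleGraph V) (S₁ S₂ : Set V) : Prop where
  cover : ∀ v w, Γ.Adj v w → (v ∈ S₁ ∧ w ∈ S₁) ∨ (v ∈ S₂ ∧ w ∈ S₂)
  isIndepSet_inter : Γ.IsIndepSet (S₁ ∩ S₂)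
  flagH1Trivial_left : FlagH1Trivial (Γ.induce S₁)
  flagH1Trivial_right : FlagH1Trivial (Γ.induce S₂)

theorem IsEdgeCocycle.map {W A B : Type} [AddCommGroup A] [AddCommGroup B] {G : SimpleGraph W}
    {κ : W → W → A} (hκ : IsEdgeCocycle G κ) (f : A →+ B) :
    IsEdgeCocycle G fun v w => f (κ v w) where
  antisymm v w h := by rw [hκ.antisymm h, map_neg]
  triangle u v w huv hvw huw := by rw [← hκ.triangle huv hvw huw, map_add]

theorem FlagH1Trivial.exists_potential {V : Type} {Γ : SimpleGraph V} {S : Set V}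
    (hS : FlagH1Trivial (Γ.induce S)) {κ : V → V → ℤ} (hκ : IsEdgeCocycle Γ κ) :
    ∃ h : V → ℤ, ∀ v ∈ S, ∀ w ∈ S, Γ.Adj v w → κ v w = h w - h v := by
  classical
  obtain ⟨h, hh⟩ := hS (fun v w => κ v w)
    { antisymm := fun _ _ hvw => hκ.antisymm hvw
      triangle := fun _ _ _ huv hvw huw => hκ.triangle huv hvw huw }
  refine ⟨fun v => if hv : v ∈ S then h ⟨v, hv⟩ else 0, fun v hv w hw hvw => ?_⟩
  simpa only [dif_pos hv, dif_pos hw] using hh ⟨v, hv⟩ ⟨w, hw⟩ hvw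

section CutCochain

variable {V : Type} {Γ : SimpleGraph V} {M N : Type} [AddCommGroup M] [Module (RAAGRing Γ) M]
  [AddCommGroup N] [Module (RAAGRing Γ) N] {S₁ S₂ : Set V}

open Classical in
variable (Γ S₁ S₂) in
/-- The image of `m` under the Mayer–Vietoris connecting homomorphism of the splitting: the
coboundary of the extension by zero of `m` restricted to `S₁ ∩ S₂`, cut off outside `S₁`. -/
noncomputable def cutCochain (m : V → M) (v w : V) : M :=
  if v ∈ S₁ ∧ w ∈ S₁ then
    vertexDiff Γ v • (S₁ ∩ S₂).indicator m w - vertexDiff Γ w • (S₁ ∩ S₂).indicator m v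
  else 0

theorem map_cutCochain (f : M →ₗ[RAAGRing Γ] N) (m : V → M) (v w : V) :
    f (cutCochain Γ S₁ S₂ m v w) = cutCochain Γ S₁ S₂ (fun u => f (m u)) v w := by
  have hind : ∀ u, f ((S₁ ∩ S₂).indicator m u) = (S₁ ∩ S₂).indicator (fun u => f (m u)) u :=
    fun u => by
      by_cases hu : u ∈ S₁ ∩ S₂ <;> simp [hu]
  simp only [cutCochain, apply_ite f, map_sub, map_smul, map_zero, hind]

theorem cutCochain_mem_edgeBoundaries
    (hcover : ∀ v w, Γ.Adj v w → (v ∈ S₁ ∧ w ∈ S₁) ∨ (v ∈ S₂ ∧ w ∈ S₂)) {m : V → M} {ξ : M}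
    (hξ : ∀ p ∈ S₁ ∩ S₂, vertexDiff Γ p • ξ = m p) :
    cutCochain Γ S₁ S₂ m ∈ edgeBoundaries Γ M := by
  classical
  refine ⟨S₂.indicator fun v => vertexDiff Γ v • ξ, fun v w hvw => ?_⟩
  by_cases hS₁ : v ∈ S₁ ∧ w ∈ S₁
  · have hind : ∀ u ∈ S₁, (S₁ ∩ S₂).indicator m u = S₂.indicator (fun v => vertexDiff Γ v • ξ) u :=
      fun u hu => by
        by_cases hu₂ : u ∈ S₂
        · rw [Set.indicator_of_mem (Set.mem_inter hu hu₂), Set.indicator_of_mem hu₂, hξ u ⟨hu, hu₂⟩]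
        · rw [Set.indicator_of_notMem fun h => hu₂ h.2, Set.indicator_of_notMem hu₂]
    rw [cutCochain, if_pos hS₁, hind v hS₁.1, hind w hS₁.2]
  · obtain ⟨hv, hw⟩ := (hcover v w hvw).resolve_left hS₁
    rw [cutCochain, if_neg hS₁, Set.indicator_of_mem hv, Set.indicator_of_mem hw,
      vertexDiff_smul_comm hvw, sub_self]

/-- The potential on `S₂` is extended to `S₁ \ S₂` by the one on `S₁`; the error is concentrated on
`S₁ ∩ S₂`. -/
theorem IsAcyclicSplitting.exists_sub_cutCochain_mem (hS : IsAcyclicSplitting Γ S₁ S₂)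
    {κ : V → V → ℤ} (hκ : IsEdgeCocycle Γ κ) (ν : M) :
    ∃ m : V → M, (fun v w => κ v w • vertexDiff Γ v • vertexDiff Γ w • ν) -
      cutCochain Γ S₁ S₂ m ∈ edgeBoundaries Γ M := by
  classical
  obtain ⟨h₁, hh₁⟩ := hS.flagH1Trivial_left.exists_potential hκ
  obtain ⟨h₂, hh₂⟩ := hS.flagH1Trivial_right.exists_potential hκ
  refine ⟨fun v => (h₁ v - h₂ v) • vertexDiff Γ v • ν,
    fun v => (if v ∈ S₂ then h₂ v else h₁ v) • vertexDiff Γ v • ν, fun v w hvw => ?_⟩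
  have hcobdry : ∀ n n' : ℤ, vertexDiff Γ v • n • vertexDiff Γ w • ν -
      vertexDiff Γ w • n' • vertexDiff Γ v • ν = (n - n') • vertexDiff Γ v • vertexDiff Γ w • ν :=
    fun n n' => by
      rw [smul_comm _ n, smul_comm _ n', vertexDiff_smul_comm hvw.symm, sub_smul]
  rw [Pi.sub_apply, Pi.sub_apply, hcobdry]
  by_cases hS₁ : v ∈ S₁ ∧ w ∈ S₁
  · have hind : ∀ u ∈ S₁, (S₁ ∩ S₂).indicator (fun u => (h₁ u - h₂ u) • vertexDiff Γ u • ν) u =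
        (if u ∈ S₂ then h₁ u - h₂ u else 0) • vertexDiff Γ u • ν := fun u hu => by
      simp [Set.indicator, hu, ite_smul]
    rw [cutCochain, if_pos hS₁, hind v hS₁.1, hind w hS₁.2, hcobdry, ← sub_smul,
      hh₁ v hS₁.1 w hS₁.2 hvw]
    congr 1
    split_ifs <;> abel
  · obtain ⟨hv, hw⟩ := (hS.cover v w hvw).resolve_left hS₁
    rw [cutCochain, if_neg hS₁, hh₂ v hv w hw hvw, if_pos hv, if_pos hw, sub_zero]

theorem IsAcyclicSplitting.cutCochain_mem_edgeBoundaries_coind (hS : IsAcyclicSplitting Γ S₁ S₂)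
    {A : Type} [AddCommGroup A] (m : V → Coind (RAAGroup V Γ) A) :
    cutCochain Γ S₁ S₂ m ∈ edgeBoundaries Γ _ :=
  have ⟨_, hξ⟩ := exists_vertexDiff_smul_eq hS.isIndepSet_inter m
  cutCochain_mem_edgeBoundaries hS.cover hξ

theorem IsAcyclicSplitting.cutCochain_mem_edgeCocyclesΛ (hS : IsAcyclicSplitting Γ S₁ S₂)
    (m : V → RAAGRing Γ) : cutCochain Γ S₁ S₂ m ∈ edgeCocyclesΛ Γ := by
  simp only [mem_edgeCocyclesΛ, map_cutCochain]
  exact hS.cutCochain_mem_edgeBoundaries_coind _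

theorem IsAcyclicSplitting.smul_mem_edgeBoundaries_coind (hS : IsAcyclicSplitting Γ S₁ S₂)
    {A : Type} [AddCommGroup A] {κ : V → V → ℤ} (hκ : IsEdgeCocycle Γ κ)
    (ν : Coind (RAAGroup V Γ) A) :
    (fun v w => κ v w • vertexDiff Γ v • vertexDiff Γ w • ν) ∈ edgeBoundaries Γ _ := by
  obtain ⟨m, hm⟩ := hS.exists_sub_cutCochain_mem hκ ν
  simpa only [sub_add_cancel] using add_mem hm (hS.cutCochain_mem_edgeBoundaries_coind m)

/-- `cutCochain` with group ring coefficients, as a map of right modules. -/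
noncomputable def IsAcyclicSplitting.cutCocycleΛ (hS : IsAcyclicSplitting Γ S₁ S₂) :
    (V → RAAGRing Γ) →ₗ[(RAAGRing Γ)ᵐᵒᵖ] edgeCocyclesΛ Γ where
  toFun m := ⟨cutCochain Γ S₁ S₂ m, hS.cutCochain_mem_edgeCocyclesΛ m⟩
  map_add' m m' := Subtype.ext <| funext₂ fun v w => by
    change cutCochain Γ S₁ S₂ (m + m') v w = cutCochain Γ S₁ S₂ m v w + cutCochain Γ S₁ S₂ m' v w
    simp only [cutCochain, Set.indicator_add', Pi.add_apply, smul_add]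
    split_ifs <;> abel
  map_smul' r m := Subtype.ext <| funext₂ fun v w =>
    (map_cutCochain (LinearMap.toSpanSingleton (RAAGRing Γ) (RAAGRing Γ) r.unop) m v w).symm

end CutCochain

section EdgeKernel

variable {V : Type} {Γ : SimpleGraph V} {S₁ S₂ : Set V}
  {g : edgeCocyclesΛ Γ →ₗ[(RAAGRing Γ)ᵐᵒᵖ] RAAGRing Γ}

/-- The kernel of a functional on edge cocycles, as a submodule of all edge cochains. -/
noncomputable def edgeKernel (g : edgeCocyclesΛ Γ →ₗ[(RAAGRing Γ)ᵐᵒᵖ] RAAGRing Γ) :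
    Submodule (RAAGRing Γ)ᵐᵒᵖ (V → V → RAAGRing Γ) :=
  (LinearMap.ker g).map (edgeCocyclesΛ Γ).subtype

theorem mem_edgeKernel {e : V → V → RAAGRing Γ} :
    e ∈ edgeKernel g ↔ ∃ he : e ∈ edgeCocyclesΛ Γ, g ⟨e, he⟩ = 0 := by
  simp [edgeKernel]

theorem mem_edgeKernel_of_eq (hg : edgeCoboundariesΛ Γ ≤ edgeKernel g)
    {e e' : V → V → RAAGRing Γ} (he : e ∈ edgeKernel g) (h : ∀ v w, Γ.Adj v w → e' v w = e v w) :
    e' ∈ edgeKernel g := by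
  have hsub : e' - e ∈ edgeKernel g :=
    hg (mem_edgeCoboundariesΛ_of_eq_zero fun v w hvw => sub_eq_zero.2 (h v w hvw))
  simpa only [sub_add_cancel] using add_mem hsub he

theorem mem_edgeKernel_of_mul {e : V → V → RAAGRing Γ} (he : e ∈ edgeCocyclesΛ Γ) {s : RAAGRing Γ}
    (hs : IsRightRegular s) (h : (fun v w => e v w * s) ∈ edgeKernel g) : e ∈ edgeKernel g := by
  obtain ⟨_, hes⟩ := mem_edgeKernel.1 h
  refine mem_edgeKernel.2 ⟨he, hs ?_⟩
  change MulOpposite.op s • g ⟨e, he⟩ = 0 * s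
  rw [← map_smul, zero_mul]
  exact hes

/-- On cut cocycles a functional has the form `m ↦ ∑ p, a p * m p`. As the cut of `p ↦ p - 1` is a
boundary, the coefficients satisfy `∑ p, a p * (p - 1) = 0`, whence they vanish. -/
theorem IsAcyclicSplitting.cutCochain_mem_edgeKernel [Finite V] (hS : IsAcyclicSplitting Γ S₁ S₂)
    (hg : edgeCoboundariesΛ Γ ≤ edgeKernel g) (m : V → RAAGRing Γ) :
    cutCochain Γ S₁ S₂ m ∈ edgeKernel g := by
  classical
  cases nonempty_fintype V
  set a : V → RAAGRing Γ := fun p => g (hS.cutCocycleΛ (Pi.single p 1)) with ha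
  have hsum : ∀ m, g (hS.cutCocycleΛ m) = ∑ p, a p * m p := fun m => by
    have hm : m = ∑ p, MulOpposite.op (m p) • Pi.single p (1 : RAAGRing Γ) := by
      conv_lhs => rw [← univ_sum_single m]
      refine sum_congr rfl fun p _ => ?_
      rw [← Pi.single_smul, op_smul_eq_mul, one_mul]
    conv_lhs => rw [hm]
    simp only [map_sum, map_smul, op_smul_eq_mul, ha]
  have ha_notMem : ∀ p, p ∉ S₁ ∩ S₂ → a p = 0 := fun p hp => by
    have hcut : hS.cutCocycleΛ (Pi.single p 1) = 0 := Subtype.ext <| funext₂ fun v w => by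
      have hind : (S₁ ∩ S₂).indicator (Pi.single p (1 : RAAGRing Γ)) = 0 :=
        Set.indicator_eq_zero'.2 <| Set.disjoint_left.2 fun q hq hqS =>
          hp (by rwa [← Set.mem_singleton_iff.1 (Pi.support_single_subset hq)])
      simp [IsAcyclicSplitting.cutCocycleΛ, cutCochain, hind]
    rw [ha]
    simp only [hcut, map_zero]
  have ha_sum : ∑ p ∈ (S₁ ∩ S₂).toFinset, a p * vertexDiff Γ p = 0 := by
    have hbdry : cutCochain Γ S₁ S₂ (vertexDiff Γ) ∈ edgeCoboundariesΛ Γ :=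
      cutCochain_mem_edgeBoundaries hS.cover (ξ := 1) fun p _ => mul_one _
    obtain ⟨_, hzero⟩ := mem_edgeKernel.1 (hg hbdry)
    rw [← (hsum (vertexDiff Γ)).symm.trans hzero]
    refine sum_subset (subset_univ _) fun p _ hp => ?_
    rw [ha_notMem p (by simpa using hp), zero_mul]
  have ha_zero : ∀ p, a p = 0 := fun p => by
    by_cases hp : p ∈ S₁ ∩ S₂
    · exact eq_zero_of_sum_mul_vertexDiff_eq_zero (by simpa using hS.isIndepSet_inter) ha_sum
        (Set.mem_toFinset.2 hp)
    · exact ha_notMem p hp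
  refine mem_edgeKernel.2 ⟨hS.cutCochain_mem_edgeCocyclesΛ m, (hsum m).trans ?_⟩
  simp only [ha_zero, zero_mul, sum_const_zero]

theorem IsAcyclicSplitting.smul_vertexDiff_mem_edgeKernel [Finite V]
    (hS : IsAcyclicSplitting Γ S₁ S₂) (hg : edgeCoboundariesΛ Γ ≤ edgeKernel g) {κ : V → V → ℤ}
    (hκ : IsEdgeCocycle Γ κ) :
    (fun v w => κ v w • (vertexDiff Γ v * vertexDiff Γ w)) ∈ edgeKernel g := by
  obtain ⟨m, hm⟩ := hS.exists_sub_cutCochain_mem hκ (1 : RAAGRing Γ)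
  simpa only [sub_add_cancel, smul_eq_mul, mul_one] using
    add_mem (hg hm) (hS.cutCochain_mem_edgeKernel hg m)

/-- If `s` divides `(v - 1) * (w - 1)` for the edges in the support of `κ`, the quotients inherit
both the cocycle condition, by solving `s • ν = 1` in the coinduced module, and the vanishing of the
functional. -/
theorem IsAcyclicSplitting.smul_mem_edgeKernel [Finite V] (hS : IsAcyclicSplitting Γ S₁ S₂)
    (hg : edgeCoboundariesΛ Γ ≤ edgeKernel g) {s : RAAGRing Γ}
    (hs : Function.Surjective (s • · : Coind (RAAGroup V Γ) (RAAGRing Γ) → _)) {κ : V → V → ℤ}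
    (hκ : IsEdgeCocycle Γ κ) {Y : V → V → RAAGRing Γ}
    (hY : ∀ v w, Γ.Adj v w → κ v w ≠ 0 → Y v w * s = vertexDiff Γ v * vertexDiff Γ w) :
    (fun v w => κ v w • Y v w) ∈ edgeKernel g := by
  have hκY : ∀ v w, Γ.Adj v w →
      κ v w • (Y v w * s) = κ v w • (vertexDiff Γ v * vertexDiff Γ w) := fun v w hvw => by
    by_cases h : κ v w = 0
    · rw [h, zero_smul, zero_smul]
    · rw [hY v w hvw h]
  refine mem_edgeKernel_of_mul ?_ (Coind.isRightRegular_of_surjective hs)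
    (mem_edgeKernel_of_eq hg (hS.smul_vertexDiff_mem_edgeKernel hg hκ) fun v w hvw => by
      rw [smul_mul_assoc, hκY v w hvw])
  obtain ⟨ν, hν : s • ν = Coind.unit _ 1⟩ := hs (Coind.unit _ 1)
  refine mem_edgeBoundaries_of_eq (hS.smul_mem_edgeBoundaries_coind hκ ν) fun v w hvw => ?_
  calc Coind.unit _ (κ v w • Y v w)
      = (κ v w • Y v w) • s • ν := by rw [hν, ← map_smul, smul_eq_mul, mul_one]
    _ = κ v w • vertexDiff Γ v • vertexDiff Γ w • ν := by
        rw [smul_smul, smul_mul_assoc, hκY v w hvw, smul_assoc, mul_smul]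

theorem groupRing_eq_sum {G : Type} [Group G] (a : GroupRing G) {T : Finset G}
    (hT : a.coeff.support ⊆ T) :
    a = ∑ x ∈ T, a.coeff x • MonoidAlgebra.single x (1 : ℤ) := by
  conv_lhs => rw [← a.sum_coeff_single,
    Finsupp.sum_of_support_subset _ hT _ fun _ _ => MonoidAlgebra.single_zero _]
  exact sum_congr rfl fun x _ => by rw [MonoidAlgebra.smul_single, smul_eq_mul, mul_one]

theorem IsAcyclicSplitting.mul_mem_edgeKernel [Finite V] (hS : IsAcyclicSplitting Γ S₁ S₂)
    (hg : edgeCoboundariesΛ Γ ≤ edgeKernel g) {s : RAAGRing Γ}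
    (hs : Function.Surjective (s • · : Coind (RAAGroup V Γ) (RAAGRing Γ) → _))
    {K : V → V → RAAGRing Γ} (hK : IsEdgeCocycle Γ K) {Y : V → V → RAAGRing Γ}
    (hY : ∀ v w, Γ.Adj v w → K v w ≠ 0 → Y v w * s = vertexDiff Γ v * vertexDiff Γ w) :
    (fun v w => Y v w * K v w) ∈ edgeKernel g := by
  classical
  cases nonempty_fintype V
  let T : Finset (RAAGroup V Γ) :=
    univ.biUnion fun v => univ.biUnion fun w => (K v w).coeff.support
  have hT : ∀ v w, (K v w).coeff.support ⊆ T := fun v w x hx =>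
    mem_biUnion.2 ⟨v, mem_univ v, mem_biUnion.2 ⟨w, mem_univ w, hx⟩⟩
  have hterm : ∀ x, (fun v w => (K v w).coeff x • Y v w) ∈ edgeKernel g := fun x =>
    hS.smul_mem_edgeKernel hg hs
      (hK.map ((Finsupp.applyAddHom x).comp (MonoidAlgebra.coeffAddEquiv (R := ℤ)).toAddMonoidHom))
      fun v w hvw hx => hY v w hvw fun h => hx (by simp [h])
  have hexpand : (fun v w => Y v w * K v w) = ∑ x ∈ T,
      MulOpposite.op (MonoidAlgebra.single x (1 : ℤ)) • fun v w => (K v w).coeff x • Y v w := by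
    funext v w
    conv_lhs => rw [groupRing_eq_sum (K v w) (hT v w), mul_sum]
    simp only [Finset.sum_apply, Pi.smul_apply, op_smul_eq_mul, smul_mul_assoc, mul_smul_comm]
  rw [hexpand]
  exact sum_mem fun x _ => Submodule.smul_mem _ _ (hterm x)

end EdgeKernel

/-! ### The decomposition of edge cocycles -/

section Decomposition

variable {V : Type} {Γ : SimpleGraph V} {e : V → V → RAAGRing Γ}

theorem vertexDiff_mul_comm {v w : V} (h : Γ.Adj v w) (a : RAAGRing Γ) :
    vertexDiff Γ w * (vertexDiff Γ v * a) = vertexDiff Γ v * (vertexDiff Γ w * a) :=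
  vertexDiff_smul_comm h.symm a

theorem edgeCocyclesΛ_antisymm (he : e ∈ edgeCocyclesΛ Γ) {v w : V} (h : Γ.Adj v w) :
    e w v = -e v w := by
  obtain ⟨m, hm⟩ := he
  refine Coind.unit_injective (G := RAAGroup V Γ) ((hm w v h.symm).trans ?_)
  rw [map_neg, ← neg_sub]
  exact congrArg _ (hm v w h).symm

theorem edgeCocyclesΛ_triangle (he : e ∈ edgeCocyclesΛ Γ) {u v w : V} (huv : Γ.Adj u v)
    (hvw : Γ.Adj v w) (huw : Γ.Adj u w) :
    vertexDiff Γ u * e v w - vertexDiff Γ v * e u w + vertexDiff Γ w * e u v = 0 := by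
  obtain ⟨m, hm⟩ := he
  have hm' : ∀ v w, Γ.Adj v w → Coind.unit (RAAGroup V Γ) (e v w) =
      vertexDiff Γ v • m w - vertexDiff Γ w • m v := hm
  refine Coind.unit_injective (G := RAAGroup V Γ) ?_
  simp only [← smul_eq_mul, map_add, map_sub, map_smul, hm' v w hvw, hm' u w huw, hm' u v huv,
    smul_sub, map_zero]
  rw [vertexDiff_smul_comm huv, vertexDiff_smul_comm huw, vertexDiff_smul_comm hvw]
  abel

theorem edgeCocyclesΛ_eq_of_triangle (he : e ∈ edgeCocyclesΛ Γ) {u v w : V} (huv : Γ.Adj u v)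
    (hvw : Γ.Adj v w) (huw : Γ.Adj u w) :
    e v w = vertexDiff Γ v * vertexQuot u (e u w) - vertexDiff Γ w * vertexQuot u (e u v) := by
  have h := congrArg (vertexQuot u) (edgeCocyclesΛ_triangle he huv hvw huw)
  rw [map_add, map_sub, vertexQuot_vertexDiff_mul, vertexQuot_vertexDiff_mul_of_adj huv,
    vertexQuot_vertexDiff_mul_of_adj huw, map_zero] at h
  rw [← sub_eq_zero, ← h]
  abel

theorem isEdgeCocycle_vertexQuot (he : e ∈ edgeCocyclesΛ Γ) :
    IsEdgeCocycle Γ fun v w => vertexQuot v (vertexQuot w (e v w)) where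
  antisymm v w h := by
    rw [edgeCocyclesΛ_antisymm he h.symm, map_neg, map_neg, vertexQuot_comm h]
  triangle u v w huv hvw huw := by
    rw [edgeCocyclesΛ_eq_of_triangle he huv hvw huw]
    simp only [map_sub, vertexQuot_vertexDiff_mul, vertexQuot_vertexDiff_mul_of_adj hvw.symm]
    rw [vertexQuot_comm huv, vertexQuot_comm huw]
    abel

/-- The part `(1 - (u - 1) Q_u) Q_w e(u, w)` of an edge cochain `e` along the edges at `u`, where
`Q_v = vertexQuot v`; on triangles at `u` it does not depend on `w`. -/
noncomputable def starPart (e : V → V → RAAGRing Γ) (u w : V) : RAAGRing Γ :=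
  vertexQuot w (e u w) - vertexDiff Γ u * vertexQuot u (vertexQuot w (e u w))

theorem starPart_eq_of_triangle (he : e ∈ edgeCocyclesΛ Γ) {u v w : V} (huv : Γ.Adj u v)
    (hvw : Γ.Adj v w) (huw : Γ.Adj u w) : starPart e u v = starPart e u w := by
  rw [starPart, starPart, edgeCocyclesΛ_eq_of_triangle he huv.symm huw hvw,
    edgeCocyclesΛ_antisymm he huv]
  simp only [map_sub, map_neg, vertexQuot_vertexDiff_mul,
    vertexQuot_vertexDiff_mul_of_adj huw.symm, mul_sub, mul_neg]
  abel

/-- The part `(1 - (v - 1) Q_v) (1 - (w - 1) Q_w) e(v, w)` of an edge cochain `e`, where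
`Q_v = vertexQuot v`; it vanishes on the edges of triangles. -/
noncomputable def isolatedPart (e : V → V → RAAGRing Γ) (v w : V) : RAAGRing Γ :=
  e v w - vertexDiff Γ v * vertexQuot v (e v w) - vertexDiff Γ w * vertexQuot w (e v w) +
    vertexDiff Γ v * (vertexDiff Γ w * vertexQuot v (vertexQuot w (e v w)))

theorem isolatedPart_antisymm (he : e ∈ edgeCocyclesΛ Γ) {v w : V} (h : Γ.Adj v w) :
    isolatedPart e v w = -isolatedPart e w v := by
  rw [isolatedPart, isolatedPart, edgeCocyclesΛ_antisymm he h]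
  simp only [map_neg, mul_neg]
  rw [vertexDiff_mul_comm h, vertexQuot_comm h]
  abel

theorem isolatedPart_eq_zero (he : e ∈ edgeCocyclesΛ Γ) {u v w : V} (huv : Γ.Adj u v)
    (hvw : Γ.Adj v w) (huw : Γ.Adj u w) : isolatedPart e v w = 0 := by
  rw [isolatedPart, edgeCocyclesΛ_eq_of_triangle he huv hvw huw]
  simp only [map_sub, vertexQuot_vertexDiff_mul, vertexQuot_vertexDiff_mul_of_adj hvw,
    vertexQuot_vertexDiff_mul_of_adj hvw.symm, mul_sub]
  rw [vertexDiff_mul_comm hvw]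
  abel

theorem isolatedPart_add_starPart (he : e ∈ edgeCocyclesΛ Γ) {v w : V} (h : Γ.Adj v w) :
    isolatedPart e v w +
        (vertexDiff Γ w * starPart e v w - vertexDiff Γ v * starPart e w v) +
        vertexDiff Γ v * vertexDiff Γ w * vertexQuot v (vertexQuot w (e v w)) = e v w := by
  rw [isolatedPart, starPart, starPart, edgeCocyclesΛ_antisymm he h]
  simp only [map_neg, mul_neg, mul_sub, mul_assoc]
  rw [vertexDiff_mul_comm h, vertexQuot_comm h]
  abel

end Decomposition

section Vanishing

variable {V : Type} [Finite V] {Γ : SimpleGraph V} {S₁ S₂ : Set V}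
  {g : edgeCocyclesΛ Γ →ₗ[(RAAGRing Γ)ᵐᵒᵖ] RAAGRing Γ}

open Classical in
theorem IsAcyclicSplitting.singleEdge_mem_edgeKernel (hS : IsAcyclicSplitting Γ S₁ S₂)
    (hg : edgeCoboundariesΛ Γ ≤ edgeKernel g) {L : V → V → RAAGRing Γ}
    (hanti : ∀ v w, Γ.Adj v w → L v w = -L w v)
    (hzero : ∀ u v w, Γ.Adj u v → Γ.Adj v w → Γ.Adj u w → L v w = 0) (ε : Sym2 V) :
    (fun v w => if s(v, w) = ε then L v w else 0) ∈ edgeKernel g := by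
  induction ε with | h p q => ?_
  have hs : Function.Surjective
      ((vertexDiff Γ p * vertexDiff Γ q) • · : Coind (RAAGroup V Γ) (RAAGRing Γ) → _) := by
    simp only [mul_smul]
    exact (vertexDiff_smul_surjective Γ p).comp (vertexDiff_smul_surjective Γ q)
  have hK : IsEdgeCocycle Γ fun v w => if s(v, w) = s(p, q) then L v w else 0 :=
    { antisymm := fun v w hvw => by
        rw [Sym2.eq_swap, hanti v w hvw, ← neg_zero, ← apply_ite Neg.neg, neg_zero]
      triangle := fun u v w huv hvw huw => by
        rw [hzero w u v huw.symm huv hvw.symm, hzero u v w huv hvw huw,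
          hzero v u w huv.symm huw hvw]
        simp only [ite_self, add_zero] }
  simpa only [one_mul] using hS.mul_mem_edgeKernel hg hs hK (Y := fun _ _ => 1) fun v w hvw h => by
    have hε := (ite_ne_right_iff.1 h).1
    rcases Sym2.eq_iff.1 hε with ⟨rfl, rfl⟩ | ⟨rfl, rfl⟩
    · exact one_mul _
    · rw [one_mul, (commute_vertexDiff hvw).eq]

theorem IsAcyclicSplitting.isolated_mem_edgeKernel (hS : IsAcyclicSplitting Γ S₁ S₂)
    (hg : edgeCoboundariesΛ Γ ≤ edgeKernel g) {L : V → V → RAAGRing Γ}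
    (hanti : ∀ v w, Γ.Adj v w → L v w = -L w v)
    (hzero : ∀ u v w, Γ.Adj u v → Γ.Adj v w → Γ.Adj u w → L v w = 0) : L ∈ edgeKernel g := by
  classical
  cases nonempty_fintype V
  refine mem_edgeKernel_of_eq hg
    (sum_mem fun ε (_ : ε ∈ univ) => hS.singleEdge_mem_edgeKernel hg hanti hzero ε) fun v w _ => ?_
  simp only [Finset.sum_apply, sum_ite_eq, mem_univ, if_true]

open Classical in
theorem IsAcyclicSplitting.star_mem_edgeKernel (hS : IsAcyclicSplitting Γ S₁ S₂)
    (hg : edgeCoboundariesΛ Γ ≤ edgeKernel g) {u : V} {M : V → RAAGRing Γ}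
    (hM : ∀ v w, Γ.Adj u v → Γ.Adj v w → Γ.Adj u w → M v = M w) :
    (fun v w => (if v = u then vertexDiff Γ w * M w else 0) -
      if w = u then vertexDiff Γ v * M v else 0) ∈ edgeKernel g := by
  have hK : IsEdgeCocycle Γ fun v w => (if v = u then M w else 0) - if w = u then M v else 0 :=
    { antisymm := fun v w _ => (neg_sub _ _).symm
      triangle := fun v₁ v₂ v₃ h₁₂ h₂₃ h₁₃ => by
        by_cases h₁ : v₁ = u
        · subst h₁
          simp [h₁₂.ne', h₁₃.ne', hM v₂ v₃ h₁₂ h₂₃ h₁₃]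
        by_cases h₂ : v₂ = u
        · subst h₂
          simp [h₁, h₂₃.ne', hM v₁ v₃ h₁₂.symm h₁₃ h₂₃]
        by_cases h₃ : v₃ = u
        · subst h₃
          simp [h₁, h₂, hM v₁ v₂ h₁₃.symm h₁₂ h₂₃.symm]
        simp [h₁, h₂, h₃] }
  refine mem_edgeKernel_of_eq hg (hS.mul_mem_edgeKernel hg (vertexDiff_smul_surjective Γ u) hK
    (Y := fun v w => if v = u then vertexDiff Γ w else vertexDiff Γ v) fun v w hvw h => ?_)
    fun v w hvw => ?_
  · rcases eq_or_ne v u with rfl | hv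
    · rw [if_pos rfl, (commute_vertexDiff hvw).eq]
    rcases eq_or_ne w u with rfl | hw
    · rw [if_neg hv]
    · simp [hv, hw] at h
  · rcases eq_or_ne v u with rfl | hv
    · simp [hvw.ne']
    · simp [hv]

theorem IsAcyclicSplitting.edgeCocyclesΛ_le_edgeKernel (hS : IsAcyclicSplitting Γ S₁ S₂)
    (hg : edgeCoboundariesΛ Γ ≤ edgeKernel g) : edgeCocyclesΛ Γ ≤ edgeKernel g := fun e he => by
  classical
  cases nonempty_fintype V
  have hisolated : isolatedPart e ∈ edgeKernel g := hS.isolated_mem_edgeKernel hg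
    (fun _ _ => isolatedPart_antisymm he) fun _ _ _ => isolatedPart_eq_zero he
  have hstar := sum_mem fun u (_ : u ∈ univ) => hS.star_mem_edgeKernel hg (M := starPart e u)
    fun _ _ huv hvw huw => starPart_eq_of_triangle he huv hvw huw
  have hproduct : (fun v w => vertexDiff Γ v * vertexDiff Γ w *
      vertexQuot v (vertexQuot w (e v w))) ∈ edgeKernel g :=
    hS.mul_mem_edgeKernel hg (s := 1) (fun η => ⟨η, one_smul _ η⟩)
      (isEdgeCocycle_vertexQuot he) fun _ _ _ _ => mul_one _
  refine mem_edgeKernel_of_eq hg (add_mem (add_mem hisolated hstar) hproduct) fun v w hvw => ?_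
  simp only [Pi.add_apply, Finset.sum_apply, sum_sub_distrib, sum_ite_eq, mem_univ, if_true]
  exact (isolatedPart_add_starPart he hvw).symm

theorem statement8_general (hS : IsAcyclicSplitting Γ S₁ S₂)
    (f : groupCohΛ (RAAGroup V Γ) 2 →ₗ[(GroupRing (RAAGroup V Γ))ᵐᵒᵖ]
      GroupRing (RAAGroup V Γ)) : f = 0 := by
  set Φ := groupCohΛTwoEquiv Γ
  let B := (edgeCoboundariesΛ Γ).submoduleOf (edgeCocyclesΛ Γ)
  let g : edgeCocyclesΛ Γ →ₗ[(RAAGRing Γ)ᵐᵒᵖ] RAAGRing Γ := (f ∘ₗ Φ.symm.toLinearMap) ∘ₗ B.mkQ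
  have hg : edgeCoboundariesΛ Γ ≤ edgeKernel g := fun e he => by
    have he' := edgeCoboundariesΛ_le_edgeCocyclesΛ he
    have hmk : B.mkQ ⟨e, he'⟩ = 0 := (Submodule.Quotient.mk_eq_zero B).2 he
    exact mem_edgeKernel.2 ⟨he', by rw [LinearMap.comp_apply, hmk, map_zero]⟩
  refine LinearMap.ext fun c => ?_
  obtain ⟨z, hz⟩ := B.mkQ_surjective (Φ c)
  obtain ⟨_, hgz⟩ := mem_edgeKernel.1 (hS.edgeCocyclesΛ_le_edgeKernel hg z.2)
  rw [← Φ.symm_apply_apply c, ← hz]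
  exact hgz

end Vanishing

/-- Let `π` be a right-angled Artin group with defining graph `Γ`. Suppose
`Γ` is the union of two induced subgraphs `Γ₁`, `Γ₂` intersecting in `Γ₀ = Γ₁ ∩ Γ₂`, where
`Γ₁` and `Γ₂` are connected with 2-connected flag complexes and `Γ₀` is a disjoint union of
vertices. Then `Hom_Λ(H²(π; Λ), Λ) = 0`. -/
theorem statement8 (V : Type) [Fintype V] [DecidableEq V] (Γ : SimpleGraph V)
    (S₁ S₂ : Finset V)
    (hcoverV : ∀ v : V, v ∈ S₁ ∨ v ∈ S₂)
    (hcoverE : ∀ v w : V, Γ.Adj v w → (v ∈ S₁ ∧ w ∈ S₁) ∨ (v ∈ S₂ ∧ w ∈ S₂))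
    (hconn₁ : (Γ.induce (↑S₁ : Set V)).Connected)
    (hconn₂ : (Γ.induce (↑S₂ : Set V)).Connected)
    (h2conn₁ : TwoConnected (flagRealization ↑(↑S₁ : Set V) (Γ.induce ↑S₁)))
    (h2conn₂ : TwoConnected (flagRealization ↑(↑S₂ : Set V) (Γ.induce ↑S₂)))
    (hΓ₀ : ∀ v w : V, v ∈ S₁ → v ∈ S₂ → w ∈ S₁ → w ∈ S₂ → ¬ Γ.Adj v w) :
    ∀ f : groupCohΛ (RAAGroup V Γ) 2 →ₗ[(GroupRing (RAAGroup V Γ))ᵐᵒᵖ]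
      GroupRing (RAAGroup V Γ), f = 0 := fun f =>
  statement8_general (S₁ := ↑S₁) (S₂ := ↑S₂)
    { cover := hcoverE
      isIndepSet_inter := fun v hv w hw _ => hΓ₀ v w hv.1 hv.2 hw.1 hw.2
      flagH1Trivial_left := flagH1Trivial_of_twoConnected h2conn₁
      flagH1Trivial_right := flagH1Trivial_of_twoConnected h2conn₂ } f
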